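/- arXiv:1411.4196 — 2 statements merged into one kernel-verified Lean document; each statement's English description precedes it below -/
import Mathlib

section
/- For every ε > 0 there exist ℓ₀ and n₀ such that for all integers ℓ ≥ ℓ₀ and n ≥ n₀ the following holds: if ℱ is a family of nℓ subsets of [n] in which every set F ∈ ℱ is incomparable to at most 4ℓ·log ℓ other sets of ℱ, then i(ℱ) ≥ (1/2 − ε)·n·ℓ²·log ℓ. -/
open Finset

/-- `crossComp 𝒜 ℬ` is the number of pairs `(A, B) ∈ 𝒜 × ℬ` with `A ⊊ B`. -/
def crossComp {n : ℕ} (𝒜 ℬ : Finset (Finset (Fin n))) : ℕ :=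
  ((𝒜 ×ˢ ℬ).filter (fun p => p.1 ⊂ p.2)).card

/-- `compCount ℱ` is the number of comparable pairs in `ℱ`, i.e. the number of unordered
pairs `{A, B}` of distinct sets in `ℱ` with `A ⊆ B` or `B ⊆ A`. -/
def compCount {n : ℕ} (ℱ : Finset (Finset (Fin n))) : ℕ := crossComp ℱ ℱ

/-- `incompCount ℱ = i(ℱ)` is the number of incomparable (unordered, distinct) pairs in `ℱ`. -/
def incompCount {n : ℕ} (ℱ : Finset (Finset (Fin n))) : ℕ :=
  ℱ.card.choose 2 - compCount ℱ

/-!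
A family `G` inside a Boolean interval of dimension `d` is sliced into heavy levels: each level
consists of the sets containing many members of the previous one, so a set dropped between two
levels contains few members of its own slice and most pairs inside a slice are incomparable. Given a
set above many members of a heavy level, dependent random choice finds a set in between which still
lies above many members of the previous level and below many members of this one; it is therefore
almost `log |G|` dimensions lower. So there are at most about `d / log |G|` slices, and convexity
turns this into a lower bound on the number of incomparable pairs of `G`.

For a general family, either the sets of large incomparability degree already give enough pairs, or
they can be removed. A linear extension of the rest is cut into windows of length at least twice the
maximum degree, and every `K`-th window is dropped. Any two sets separated by a dropped window are
comparable, so the remaining blocks live in Boolean intervals on disjoint sets of coordinates, and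
the bounds for the blocks add up.
-/

section IncomparablePairs

variable {β : Type*}

lemma card_filter_swap (P : Finset β) (r : β → β → Prop) [DecidableRel r] :
    #{p ∈ P ×ˢ P | r p.2 p.1} = #{p ∈ P ×ˢ P | r p.1 p.2} := by
  simp only [card_filter]
  rw [sum_product, sum_product_right]

variable [PartialOrder β] [DecidableLE β]

/-- The ordered pairs of incomparable elements of `G`; each unordered incomparable pair is counted
twice. -/
def incompPairs (G : Finset β) : Finset (β × β) :=
  {p ∈ G ×ˢ G | IncompRel (· ≤ ·) p.1 p.2}

lemma mem_incompPairs {G : Finset β} {p : β × β} :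
    p ∈ incompPairs G ↔ (p.1 ∈ G ∧ p.2 ∈ G) ∧ IncompRel (· ≤ ·) p.1 p.2 := by
  rw [incompPairs, mem_filter, mem_product]

lemma incompPairs_mono {G H : Finset β} (h : G ⊆ H) : incompPairs G ⊆ incompPairs H :=
  filter_subset_filter _ (product_subset_product h h)

lemma disjoint_incompPairs {G H : Finset β} (h : Disjoint G H) :
    Disjoint (incompPairs G) (incompPairs H) :=
  disjoint_filter_filter (disjoint_product.2 (Or.inl h))

lemma sum_card_incompPairs_le {ι : Type*} {s : Finset ι} {P : ι → Finset β} {G : Finset β}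
    (hsub : ∀ i ∈ s, P i ⊆ G) (hdisj : (s : Set ι).PairwiseDisjoint P) :
    ∑ i ∈ s, #(incompPairs (P i)) ≤ #(incompPairs G) := by
  classical
  rw [← card_biUnion fun i hi j hj hij => disjoint_incompPairs (hdisj hi hj hij)]
  exact card_le_card (biUnion_subset.2 fun i hi => incompPairs_mono (hsub i hi))

lemma card_mul_le_card_incompPairs {G H : Finset β} {d : ℝ} (hHG : H ⊆ G)
    (hdeg : ∀ x ∈ H, d ≤ #{y ∈ G | IncompRel (· ≤ ·) x y}) :
    #H * d ≤ #(incompPairs G) := by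
  have hsum : #(incompPairs G) = ∑ x ∈ G, #{y ∈ G | IncompRel (· ≤ ·) x y} := by
    simp only [incompPairs, card_filter, sum_product]
  calc (#H : ℝ) * d ≤ ∑ x ∈ H, (#{y ∈ G | IncompRel (· ≤ ·) x y} : ℝ) := by
        simpa only [nsmul_eq_mul] using card_nsmul_le_sum H _ d hdeg
    _ ≤ ∑ x ∈ G, (#{y ∈ G | IncompRel (· ≤ ·) x y} : ℝ) :=
        sum_le_sum_of_subset_of_nonneg hHG fun _ _ _ => by positivity
    _ = #(incompPairs G) := by rw [hsum, Nat.cast_sum]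

lemma card_le_pairs_le {P : Finset β} {q : ℝ} (h : ∀ y ∈ P, (#{x ∈ P | x ≤ y} : ℝ) ≤ q) :
    (#{p ∈ P ×ˢ P | p.1 ≤ p.2} : ℝ) ≤ #P * q := by
  have hsum : #{p ∈ P ×ˢ P | p.1 ≤ p.2} = ∑ y ∈ P, #{x ∈ P | x ≤ y} := by
    simp only [card_filter, sum_product_right]
  rw [hsum, Nat.cast_sum, ← nsmul_eq_mul]
  exact sum_le_card_nsmul _ _ q h

lemma sq_card_sub_le_card_incompPairs {P : Finset β} {q : ℝ}
    (h : ∀ y ∈ P, (#{x ∈ P | x ≤ y} : ℝ) ≤ q) :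
    (#P : ℝ) ^ 2 - 2 * q * #P ≤ #(incompPairs P) := by
  classical
  have hcover : P ×ˢ P ⊆
      incompPairs P ∪ ({p ∈ P ×ˢ P | p.1 ≤ p.2} ∪ {p ∈ P ×ˢ P | p.2 ≤ p.1}) := fun p hp => by
    simp only [mem_union, mem_incompPairs, mem_filter, hp, mem_product.1 hp, IncompRel, true_and]
    tauto
  have hcard := (card_le_card hcover).trans
    ((card_union_le _ _).trans (Nat.add_le_add_left (card_union_le _ _) _))
  rw [card_product, card_filter_swap P (· ≤ ·)] at hcard
  have hcard' : (#P : ℝ) * #P ≤ #(incompPairs P) +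
      (#{p ∈ P ×ˢ P | p.1 ≤ p.2} + #{p ∈ P ×ˢ P | p.1 ≤ p.2}) := by exact_mod_cast hcard
  linarith [card_le_pairs_le h]

lemma card_incompPairs_add_two_mul_card_lt [DecidableLT β] (G : Finset β) :
    #(incompPairs G) + 2 * #{p ∈ G ×ˢ G | p.1 < p.2} = 2 * (#G).choose 2 := by
  classical
  have hoffDiag : G.offDiag =
      incompPairs G ∪ ({p ∈ G ×ˢ G | p.1 < p.2} ∪ {p ∈ G ×ˢ G | p.2 < p.1}) := by
    ext p
    simp only [mem_incompPairs, mem_offDiag, mem_union, mem_filter, mem_product, IncompRel,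
      lt_iff_le_not_ge, ne_eq, le_antisymm_iff]
    tauto
  have hlt : Disjoint {p ∈ G ×ˢ G | p.1 < p.2} {p ∈ G ×ˢ G | p.2 < p.1} :=
    disjoint_filter.2 fun _ _ h => h.asymm
  have hincomp : Disjoint (incompPairs G)
      ({p ∈ G ×ˢ G | p.1 < p.2} ∪ {p ∈ G ×ˢ G | p.2 < p.1}) := by
    rw [← filter_or]
    exact disjoint_filter.2 fun _ _ h hlt => hlt.elim (h.1 ·.le) (h.2 ·.le)
  have hcard := congrArg card hoffDiag
  rw [card_union_of_disjoint hincomp, card_union_of_disjoint hlt, card_filter_swap G (· < ·),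
    offDiag_card] at hcard
  rw [Nat.choose_two_right, Nat.mul_div_cancel' (Nat.even_mul_pred_self _).two_dvd, Nat.mul_sub,
    mul_one, hcard, two_mul]

end IncomparablePairs

section DependentRandomChoice

variable {β : Type*} [SemilatticeInf β] [DecidableLE β]

lemma sum_card_le_inf'_piFinset (S Y : Finset β) (t : ℕ) :
    ∑ T ∈ Fintype.piFinset fun _ : Fin (t + 1) => S, #{y ∈ Y | y ≤ univ.inf' univ_nonempty T} =
      ∑ y ∈ Y, #{x ∈ S | y ≤ x} ^ (t + 1) := by
  refine (sum_card_bipartiteAbove_eq_sum_card_bipartiteBelow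
    fun T y => y ≤ univ.inf' univ_nonempty T).trans (sum_congr rfl fun y _ => ?_)
  rw [← Fintype.card_piFinset_const, bipartiteBelow]
  congr 1
  ext T
  simp only [mem_filter, Fintype.mem_piFinset, le_inf'_iff, mem_univ, true_implies, forall_and]

lemma pow_le_sum_card_le_inf' {S Y : Finset β} {γ M : ℝ} (t : ℕ) (hγ : 0 < γ) (hM : 0 < M)
    (hS : S.Nonempty) (hY : (#Y : ℝ) ≤ M) (hlow : ∀ x ∈ S, γ * M ≤ #{y ∈ Y | y ≤ x}) :
    γ ^ (t + 1) * M * #S ^ (t + 1) ≤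
      ∑ T ∈ Fintype.piFinset fun _ : Fin (t + 1) => S,
        (#{y ∈ Y | y ≤ univ.inf' univ_nonempty T} : ℝ) := by
  have hdouble : #S * (γ * M) ≤ ∑ y ∈ Y, (#{x ∈ S | y ≤ x} : ℝ) := by
    have hswap := sum_card_bipartiteAbove_eq_sum_card_bipartiteBelow (s := S) (t := Y)
      fun x y => y ≤ x
    simp only [bipartiteAbove, bipartiteBelow] at hswap
    rw [← Nat.cast_sum, ← hswap, Nat.cast_sum, ← nsmul_eq_mul]
    exact card_nsmul_le_sum _ _ _ hlow
  have hYpos : (0 : ℝ) < #Y := by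
    obtain ⟨x, hx⟩ := hS
    calc (0 : ℝ) < γ * M := by positivity
      _ ≤ #{y ∈ Y | y ≤ x} := hlow x hx
      _ ≤ #Y := by exact_mod_cast card_filter_le _ _
  calc γ ^ (t + 1) * M * #S ^ (t + 1) = (#S * (γ * M)) ^ (t + 1) / M ^ t := by
        rw [mul_pow, mul_pow, pow_succ M t]
        field_simp
    _ ≤ (∑ y ∈ Y, (#{x ∈ S | y ≤ x} : ℝ)) ^ (t + 1) / #Y ^ t := by gcongr
    _ ≤ ∑ y ∈ Y, (#{x ∈ S | y ≤ x} : ℝ) ^ (t + 1) :=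
        pow_sum_div_card_le_sum_pow (fun _ _ => by positivity) t
    _ = _ := by exact_mod_cast (sum_card_le_inf'_piFinset S Y t).symm

variable [LocallyFiniteOrder β]

omit [DecidableLE β] in
lemma inf'_mem_Icc {S : Finset β} {a b : β} (hS : S ⊆ Icc a b) {t : ℕ} {T : Fin (t + 1) → β}
    (hT : ∀ i, T i ∈ S) : univ.inf' univ_nonempty T ∈ Icc a b :=
  mem_Icc.2 ⟨le_inf' _ _ fun i _ => (mem_Icc.1 (hS (hT i))).1,
    (inf'_le T (mem_univ 0)).trans (mem_Icc.1 (hS (hT 0))).2⟩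

lemma card_tuples_few_ge_inf'_le {S : Finset β} {a b : β} (hS : S ⊆ Icc a b) (m t : ℕ) :
    #{T ∈ Fintype.piFinset fun _ : Fin (t + 1) => S |
        #{x ∈ S | univ.inf' univ_nonempty T ≤ x} < m} ≤ m ^ (t + 1) * #(Icc a b) := by
  classical
  refine card_le_mul_card_image_of_maps_to (f := fun T => univ.inf' univ_nonempty T)
    (fun T hT => inf'_mem_Icc hS (Fintype.mem_piFinset.1 (mem_filter.1 hT).1)) _ fun w _ => ?_
  rcases lt_or_ge #{x ∈ S | w ≤ x} m with hfew | hmany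
  · calc _ ≤ #(Fintype.piFinset fun _ : Fin (t + 1) => {x ∈ S | w ≤ x}) := by
          refine card_le_card fun T hT => Fintype.mem_piFinset.2 fun i => ?_
          obtain ⟨hTS, rfl⟩ := mem_filter.1 hT
          exact mem_filter.2
            ⟨Fintype.mem_piFinset.1 (mem_filter.1 hTS).1 i, inf'_le T (mem_univ i)⟩
      _ = #{x ∈ S | w ≤ x} ^ (t + 1) := Fintype.card_piFinset_const _ _
      _ ≤ m ^ (t + 1) := by gcongr
  · rw [filter_eq_empty_iff.2, card_empty]
    · exact Nat.zero_le _
    · rintro T hT rfl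
      exact hmany.not_gt (mem_filter.1 hT).2

/-- Dependent random choice: the infimum of `t + 1` random members of `S` lies on average above
`γ ^ (t + 1) * M` members of `Y`, and it rarely lies below fewer than `m` members of `S`. -/
lemma exists_mem_Icc_many_le_many_ge {S Y : Finset β} {a b : β} {γ M : ℝ} {m t : ℕ} (hγ : 0 < γ)
    (hM : 0 < M) (hS : S.Nonempty) (hSab : S ⊆ Icc a b) (hY : (#Y : ℝ) ≤ M)
    (hlow : ∀ x ∈ S, γ * M ≤ #{y ∈ Y | y ≤ x})
    (hm : 4 * (#(Icc a b) * (m : ℝ) ^ (t + 1)) ≤ (γ * #S) ^ (t + 1)) :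
    ∃ w ∈ Icc a b, γ ^ (t + 1) * M / 2 ≤ #{y ∈ Y | y ≤ w} ∧ m ≤ #{x ∈ S | w ≤ x} := by
  classical
  by_contra! hnone
  set tuples := Fintype.piFinset fun _ : Fin (t + 1) => S
  set bad := {T ∈ tuples | #{x ∈ S | univ.inf' univ_nonempty T ≤ x} < m}
  have hbad : 4 * (#bad : ℝ) ≤ (γ * #S) ^ (t + 1) := by
    refine le_trans ?_ hm
    rw [mul_comm (#(Icc a b) : ℝ)]
    gcongr
    exact_mod_cast card_tuples_few_ge_inf'_le hSab m t
  have hterm : ∀ T ∈ tuples, (#{y ∈ Y | y ≤ univ.inf' univ_nonempty T} : ℝ) ≤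
      γ ^ (t + 1) * M / 2 + if T ∈ bad then M else 0 := by
    intro T hT
    split_ifs with hTbad
    · calc (#{y ∈ Y | y ≤ univ.inf' univ_nonempty T} : ℝ) ≤ #Y := by
            exact_mod_cast card_filter_le _ _
        _ ≤ γ ^ (t + 1) * M / 2 + M := by linarith [show 0 < γ ^ (t + 1) * M by positivity]
    · have hgood : m ≤ #{x ∈ S | univ.inf' univ_nonempty T ≤ x} :=
        not_lt.1 fun hlt => hTbad (mem_filter.2 ⟨hT, hlt⟩)
      by_contra! hgt
      exact hgood.not_gt (hnone _ (inf'_mem_Icc hSab (Fintype.mem_piFinset.1 hT))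
        (by linarith))
  have hupper := sum_le_sum hterm
  rw [sum_add_distrib, sum_const, ← sum_filter, filter_mem_eq_inter,
    inter_eq_right.2 (filter_subset _ _), sum_const, Fintype.card_piFinset_const, nsmul_eq_mul,
    nsmul_eq_mul, Nat.cast_pow] at hupper
  have hlower := pow_le_sum_card_le_inf' t hγ hM hS hY hlow
  have hSpos : (0 : ℝ) < #S := by exact_mod_cast hS.card_pos
  have hpos : 0 < γ ^ (t + 1) * M * #S ^ (t + 1) := by positivity
  rw [mul_pow] at hbad
  linarith [mul_le_mul_of_nonneg_right hbad hM.le]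

end DependentRandomChoice

section HeavyLevels

variable {β : Type*} [PartialOrder β] [DecidableLE β]

/-- The `j`-th heavy level of `G`: the members of `G` lying above at least `q` members of the
previous heavy level. -/
noncomputable def heavyLevel (G : Finset β) (q : ℝ) : ℕ → Finset β
  | 0 => G
  | j + 1 => {z ∈ G | q ≤ #{x ∈ heavyLevel G q j | x ≤ z}}

variable {G : Finset β} {q : ℝ}

lemma heavyLevel_subset : ∀ j, heavyLevel G q j ⊆ G
  | 0 => Subset.rfl
  | _ + 1 => filter_subset _ _

lemma mem_heavyLevel_succ {j : ℕ} {z : β} :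
    z ∈ heavyLevel G q (j + 1) ↔ z ∈ G ∧ q ≤ #{x ∈ heavyLevel G q j | x ≤ z} :=
  mem_filter

lemma antitone_heavyLevel : Antitone (heavyLevel G q) := by
  refine antitone_nat_of_succ_le fun j => ?_
  induction j with
  | zero => exact heavyLevel_subset 1
  | succ j ih =>
    refine monotone_filter_right _ fun z _ hz => hz.trans ?_
    exact_mod_cast card_le_card (filter_subset_filter _ ih)

variable [DecidableEq β]

lemma sum_card_heavyLevel_sdiff (r : ℕ) :
    ∑ j ∈ range r, (#(heavyLevel G q j \ heavyLevel G q (j + 1)) : ℝ) =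
      #G - #(heavyLevel G q r) := by
  refine (sum_congr rfl fun j _ => cast_card_sdiff (antitone_heavyLevel j.le_succ)).trans ?_
  exact sum_range_sub' (fun j => (#(heavyLevel G q j) : ℝ)) r

lemma pairwise_disjoint_heavyLevel_sdiff :
    Pairwise (Function.onFun Disjoint fun j => heavyLevel G q j \ heavyLevel G q (j + 1)) :=
  (pairwise_disjoint_on _).2 fun _ _ hij =>
    sdiff_disjoint.mono_right (sdiff_subset.trans (antitone_heavyLevel (Nat.succ_le_of_lt hij)))

lemma sq_card_heavyLevel_sdiff_le (j : ℕ) :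
    (#(heavyLevel G q j \ heavyLevel G q (j + 1)) : ℝ) ^ 2 -
        2 * q * #(heavyLevel G q j \ heavyLevel G q (j + 1)) ≤
      #(incompPairs (heavyLevel G q j \ heavyLevel G q (j + 1))) := by
  refine sq_card_sub_le_card_incompPairs fun y hy => ?_
  obtain ⟨hyj, hysucc⟩ := mem_sdiff.1 hy
  have hlight : (#{x ∈ heavyLevel G q j | x ≤ y} : ℝ) < q :=
    not_le.1 fun h => hysucc (mem_heavyLevel_succ.2 ⟨heavyLevel_subset j hyj, h⟩)
  refine le_trans ?_ hlight.le
  exact_mod_cast card_le_card (filter_subset_filter _ sdiff_subset)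

omit [DecidableEq β] in
lemma two_mul_card_sub_le_card_incompPairs (hq : 0 ≤ q) (r : ℕ) (w : ℝ) :
    2 * w * (#G - #(heavyLevel G q r)) - r * w ^ 2 - 2 * q * #G ≤ #(incompPairs G) := by
  classical
  set P := fun j => heavyLevel G q j \ heavyLevel G q (j + 1)
  have htotal : ∑ j ∈ range r, (#(P j) : ℝ) = #G - #(heavyLevel G q r) :=
    sum_card_heavyLevel_sdiff r
  have hpairs : ∑ j ∈ range r, (#(incompPairs (P j)) : ℝ) ≤ #(incompPairs G) := by
    exact_mod_cast sum_card_incompPairs_le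
      (fun j _ => sdiff_subset.trans (heavyLevel_subset j))
      (pairwise_disjoint_heavyLevel_sdiff.set_pairwise _)
  have hslice (j : ℕ) : (2 * w - 2 * q) * #(P j) - w ^ 2 ≤ #(incompPairs (P j)) := by
    linarith [sq_card_heavyLevel_sdiff_le (G := G) (q := q) j, sq_nonneg ((#(P j) : ℝ) - w)]
  have hsum := (sum_le_sum fun j (_ : j ∈ range r) => hslice j).trans hpairs
  rw [sum_sub_distrib, ← mul_sum, htotal, sum_const, card_range, nsmul_eq_mul] at hsum
  linarith [mul_nonneg hq (Nat.cast_nonneg (α := ℝ) #(heavyLevel G q r))]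

end HeavyLevels

section BooleanInterval

variable {α : Type*} [DecidableEq α]

/-- The numerical condition under which dependent random choice with `t + 1` samples gains `k`
dimensions per heavy level, for families of at most `M` sets with threshold `γ * M` in a Boolean
interval of dimension `d`. -/
def CanClimb (γ M : ℝ) (k t d : ℕ) : Prop :=
  4 * (2 ^ d * (2 ^ k) ^ (t + 1)) ≤ (γ * (γ ^ (t + 1) * M / 2)) ^ (t + 1)

variable {γ M : ℝ} {k t : ℕ}

lemma CanClimb.two_pow_le {d : ℕ} (h : CanClimb γ M k t d) (hγ : 0 < γ) (hγ1 : γ ≤ 1)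
    (hM : 0 < M) : 2 ^ k ≤ γ ^ (t + 1) * M / 2 := by
  have hpow : ((2 : ℝ) ^ k) ^ (t + 1) ≤ (γ * (γ ^ (t + 1) * M / 2)) ^ (t + 1) := by
    refine le_trans ?_ h
    rw [← mul_assoc]
    have hone : (1 : ℝ) ≤ 2 ^ d := one_le_pow₀ one_le_two
    exact le_mul_of_one_le_left (by positivity) (by linarith)
  exact ((pow_le_pow_iff_left₀ (by positivity) (by positivity) t.succ_ne_zero).1 hpow).trans
    (mul_le_of_le_one_left (by positivity) hγ1)

lemma card_add_le_card_of_two_pow_le {S : Finset (Finset α)} {W Z : Finset α} (hS : S ⊆ Icc W Z)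
    (hk : 2 ^ k ≤ #S) : #W + k ≤ #Z := by
  obtain ⟨x, hx⟩ := card_pos.1 ((pow_pos two_pos k).trans_le hk)
  have hWZ : W ⊆ Z := (mem_Icc.1 (hS hx)).1.trans (mem_Icc.1 (hS hx)).2
  have hpow : 2 ^ k ≤ 2 ^ (#Z - #W) := hk.trans ((card_le_card hS).trans_eq (card_Icc_finset hWZ))
  have hkle := (Nat.pow_le_pow_iff_right one_lt_two).1 hpow
  have := card_le_card hWZ
  omega

lemma card_add_mul_le_card_of_le_card_heavyLevel {G : Finset (Finset α)} {A B : Finset α}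
    (hγ : 0 < γ) (hγ1 : γ ≤ 1) (hM : 0 < M) (hGAB : G ⊆ Icc A B) (hGM : (#G : ℝ) ≤ M)
    (hclimb : CanClimb γ M k t (#B - #A)) (j : ℕ) {Z : Finset α} (hZB : Z ⊆ B)
    (hZ : γ ^ (t + 1) * M / 2 ≤ #{x ∈ heavyLevel G (γ * M) j | x ≤ Z}) :
    #A + (j + 1) * k ≤ #Z := by
  have htwo := hclimb.two_pow_le hγ hγ1 hM
  have hbelow (j : ℕ) (Z : Finset α) : {x ∈ heavyLevel G (γ * M) j | x ≤ Z} ⊆ Icc A Z :=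
    fun x hx => mem_Icc.2
      ⟨(mem_Icc.1 (hGAB (heavyLevel_subset j (mem_filter.1 hx).1))).1, (mem_filter.1 hx).2⟩
  induction j generalizing Z with
  | zero =>
    rw [zero_add, one_mul]
    exact card_add_le_card_of_two_pow_le (hbelow 0 Z) (by exact_mod_cast htwo.trans hZ)
  | succ j ih =>
    set S := {x ∈ heavyLevel G (γ * M) (j + 1) | x ≤ Z}
    have hS : S.Nonempty := card_pos.1 <| by
      exact_mod_cast (show (0 : ℝ) < γ ^ (t + 1) * M / 2 by positivity).trans_le hZ
    have hAZ : A ⊆ Z := by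
      obtain ⟨x, hx⟩ := hS
      exact (mem_Icc.1 (hbelow _ _ hx)).1.trans (mem_Icc.1 (hbelow _ _ hx)).2
    have hfew : 4 * (#(Icc A Z) * ((2 ^ k : ℕ) : ℝ) ^ (t + 1)) ≤ (γ * #S) ^ (t + 1) := by
      calc 4 * (#(Icc A Z) * ((2 ^ k : ℕ) : ℝ) ^ (t + 1))
          = 4 * (2 ^ (#Z - #A) * (2 ^ k) ^ (t + 1)) := by
            rw [card_Icc_finset hAZ]
            push_cast
            rfl
        _ ≤ 4 * (2 ^ (#B - #A) * (2 ^ k) ^ (t + 1)) := by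
            gcongr
            exact one_le_two
        _ ≤ (γ * (γ ^ (t + 1) * M / 2)) ^ (t + 1) := hclimb
        _ ≤ (γ * #S) ^ (t + 1) := by gcongr
    obtain ⟨W, hW, hWlow, hWup⟩ := exists_mem_Icc_many_le_many_ge
      (Y := heavyLevel G (γ * M) j) hγ hM hS (hbelow _ _)
      (le_trans (by exact_mod_cast card_le_card (heavyLevel_subset j)) hGM)
      (fun x hx => (mem_heavyLevel_succ.1 (mem_filter.1 hx).1).2) hfew
    have hAW := ih ((mem_Icc.1 hW).2.trans hZB) hWlow
    have hWZ : #W + k ≤ #Z := card_add_le_card_of_two_pow_le (fun x hx => mem_Icc.2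
      ⟨(mem_filter.1 hx).2, (mem_filter.1 (mem_filter.1 hx).1).2⟩) hWup
    linarith

lemma card_heavyLevel_lt {G : Finset (Finset α)} {A B : Finset α} (hγ : 0 < γ) (hγ1 : γ ≤ 1)
    (hM : 0 < M) (hGAB : G ⊆ Icc A B) (hGM : (#G : ℝ) ≤ M) (hclimb : CanClimb γ M k t (#B - #A))
    (hk : 0 < k) : (#(heavyLevel G (γ * M) ((#B - #A) / k)) : ℝ) < γ * M := by
  by_contra! hmany
  have hsmall : γ ^ (t + 1) * M / 2 ≤ γ * M := by
    have hpow : γ ^ (t + 1) * M ≤ γ * M := by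
      gcongr
      exact pow_le_of_le_one hγ.le hγ1 t.succ_ne_zero
    linarith [show 0 < γ * M by positivity]
  have hall : {x ∈ heavyLevel G (γ * M) ((#B - #A) / k) | x ≤ B} =
      heavyLevel G (γ * M) ((#B - #A) / k) :=
    filter_true_of_mem fun x hx => (mem_Icc.1 (hGAB (heavyLevel_subset _ hx))).2
  have hclimbed := card_add_mul_le_card_of_le_card_heavyLevel hγ hγ1 hM hGAB hGM hclimb
    ((#B - #A) / k) Subset.rfl (by rw [hall]; exact hsmall.trans hmany)
  have := Nat.lt_mul_div_succ (#B - #A) hk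
  rw [mul_comm] at this
  omega

lemma card_incompPairs_ge_of_subset_Icc {G : Finset (Finset α)} {A B : Finset α} {l : ℝ}
    (hγ : 0 < γ) (hγ1 : γ ≤ 1) (hM : 0 < M) (hl : 0 ≤ l) (hk : 0 < k) (hGAB : G ⊆ Icc A B)
    (hGM : (#G : ℝ) ≤ M) (hclimb : ∀ d : ℕ, d * l ≤ 2 * M → CanClimb γ M k t d) :
    2 * k * l * (#G - γ * M) - (#B - #A : ℕ) * k * l ^ 2 - 2 * (γ * M) * #G ≤
      #(incompPairs G) := by
  set d := #B - #A with hd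
  rcases le_or_gt (d * l) (2 * M) with hdl | hdl
  · have htop := card_heavyLevel_lt hγ hγ1 hM hGAB hGM (hclimb _ hdl) hk
    rw [← hd] at htop
    have hlevels := two_mul_card_sub_le_card_incompPairs (G := G) (q := γ * M) (by positivity)
      (d / k) (k * l)
    have hdk : ((d / k : ℕ) : ℝ) * k ≤ d := by exact_mod_cast Nat.div_mul_le_self d k
    have hquad : ((d / k : ℕ) : ℝ) * (k * l) ^ 2 ≤ d * k * l ^ 2 := by
      calc ((d / k : ℕ) : ℝ) * (k * l) ^ 2 = ((d / k : ℕ) : ℝ) * k * (k * l ^ 2) := by ring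
        _ ≤ d * (k * l ^ 2) := by gcongr
        _ = d * k * l ^ 2 := by ring
    linarith [mul_le_mul_of_nonneg_left htop.le (show 0 ≤ 2 * (k * l) by positivity)]
  · have hkl : 0 ≤ k * l := by positivity
    have hγM : 0 < γ * M := by positivity
    have hneg := mul_le_mul_of_nonneg_left (show 2 * (#G - γ * M) ≤ d * l by linarith) hkl
    have hG0 : 0 ≤ 2 * (γ * M) * #G := by positivity
    linarith [Nat.cast_nonneg (α := ℝ) #(incompPairs G)]

end BooleanInterval

section LinearRank

variable {β : Type*} [PartialOrder β]

/-- The number of members of `F` that precede `x` in a fixed linear extension of the order. -/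
noncomputable def linearRank (F : Finset β) (x : β) : ℕ :=
  #{y ∈ F | toLinearExtension y < toLinearExtension x}

variable {F : Finset β} {x y : β}

lemma linearRank_lt_linearRank (hx : x ∈ F) (hxy : toLinearExtension x < toLinearExtension y) :
    linearRank F x < linearRank F y := by
  refine card_lt_card (ssubset_iff_of_subset ?_ |>.2 ⟨x, ?_, ?_⟩)
  · exact monotone_filter_right _ fun z _ hz => hz.trans hxy
  · exact mem_filter.2 ⟨hx, hxy⟩
  · exact fun h => (mem_filter.1 h).2.false

lemma injOn_linearRank : Set.InjOn (linearRank F) F := fun x hx y hy hxy =>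
  (lt_trichotomy (toLinearExtension x) (toLinearExtension y)).elim3
    (fun h => absurd hxy (linearRank_lt_linearRank hx h).ne) id
    (fun h => absurd hxy (linearRank_lt_linearRank hy h).ne')

lemma linearRank_lt_card (hx : x ∈ F) : linearRank F x < #F :=
  card_lt_card (filter_ssubset.2 ⟨x, hx, lt_irrefl _⟩)

lemma le_of_linearRank_add_lt [DecidableLE β]
    (h : linearRank F x + (#{z ∈ F | IncompRel (· ≤ ·) x z} + #{z ∈ F | IncompRel (· ≤ ·) y z}) <
      linearRank F y) : x ≤ y := by
  classical
  by_contra hxy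
  refine h.not_ge (le_trans (card_le_card fun z hz => ?_)
    ((card_union_le _ _).trans (Nat.add_le_add_left (card_union_le _ _) _)))
  obtain ⟨hzF, hzy⟩ := mem_filter.1 hz
  simp only [mem_union, mem_filter, hzF, true_and]
  by_contra! hz
  obtain ⟨hxz, hx, hy⟩ := hz
  have hzy' : z ≤ y := by
    by_contra hzy'
    exact hy ⟨fun hyz => hzy.not_ge (toLinearExtension.monotone hyz), hzy'⟩
  have hxz' : ¬ x ≤ z := fun h => hxy (h.trans hzy')
  have hzx : z ≤ x := by
    by_contra hzx
    exact hx ⟨hxz', hzx⟩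
  exact hxz' (le_of_eq (hxz.antisymm (toLinearExtension.monotone hzx)))

end LinearRank

section LayeredBlocks

lemma add_lt_of_div_lt_div {p q g K : ℕ} (hg : 0 < g) (hq : q / g % K ≠ 0)
    (h : p / (g * K) < q / (g * K)) : p + g < q := by
  rw [← Nat.div_div_eq_div_mul, ← Nat.div_div_eq_div_mul] at h
  have hp : p / g < K * (q / g / K) := by
    rw [mul_comm]
    exact (Nat.div_lt_iff_lt_mul (Nat.pos_of_ne_zero fun hK => by simp [hK] at h)).1 h
  have hgap : p / g + 1 + 1 ≤ q / g := by
    have := Nat.div_add_mod (q / g) K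
    omega
  calc p + g < g * (p / g + 1) + g := by gcongr; exact Nat.lt_mul_div_succ p hg
    _ = g * (p / g + 1 + 1) := by ring
    _ ≤ g * (q / g) := by gcongr
    _ ≤ q := Nat.mul_div_le q g

variable {β : Type*} {F : Finset β}

lemma card_filter_div_eq_le {r : β → ℕ} (hr : Set.InjOn r F) {m : ℕ} (hm : 0 < m) (b : ℕ) :
    #{x ∈ F | r x / m = b} ≤ m := by
  have hcard : #(Ico (b * m) (b * m + m)) = m := by rw [Nat.card_Ico, Nat.add_sub_cancel_left]
  refine le_of_le_of_eq (card_le_card_of_injOn r (fun x hx => ?_) (hr.mono ?_)) hcard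
  · obtain rfl := (mem_filter.1 hx).2
    exact mem_Ico.2 ⟨Nat.div_mul_le_self _ _, Nat.lt_div_mul_add hm⟩
  · exact coe_subset.2 (filter_subset _ _)

lemma exists_mul_card_filter_add_mod_eq_zero_le (a : β → ℕ) {K : ℕ} (hK : 0 < K) :
    ∃ s ≤ K, K * #{x ∈ F | (a x + s) % K = 0} ≤ #F := by
  obtain ⟨v, hv, hfiber⟩ := exists_card_fiber_lt_of_card_lt_mul (s := F) (t := range K)
    (f := fun x => a x % K) (n := #F / K + 1) (by
      rw [card_range]
      exact Nat.lt_mul_div_succ _ hK)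
  have hvK := mem_range.1 hv
  refine ⟨K - v, Nat.sub_le K v, le_trans ?_ (Nat.mul_div_le #F K)⟩
  refine Nat.mul_le_mul_left K ((card_le_card (monotone_filter_right _ fun x _ hx => ?_)).trans
    (Nat.lt_succ_iff.1 hfiber))
  calc a x % K = (a x + (K - v) + v) % K := by
        rw [add_assoc, Nat.sub_add_cancel hvK.le, Nat.add_mod_right]
    _ = v := by rw [← Nat.mod_add_mod, hx, zero_add, Nat.mod_eq_of_lt hvK]

variable [PartialOrder β] [DecidableLE β]

lemma exists_layered_blocks {g K : ℕ} (hg : 0 < g) (hK : 0 < K)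
    (hdeg : ∀ x ∈ F, 2 * #{y ∈ F | IncompRel (· ≤ ·) x y} ≤ g) :
    ∃ F' ⊆ F, ∃ f : β → ℕ, K * #F ≤ K * #F' + #F ∧ (∀ x ∈ F', f x < #F / (g * K) + 2) ∧
      (∀ b, #{x ∈ F' | f x = b} ≤ g * K) ∧ ∀ x ∈ F', ∀ y ∈ F', f x < f y → x ≤ y := by
  obtain ⟨s, hsK, hs⟩ := exists_mul_card_filter_add_mod_eq_zero_le (F := F)
    (fun x => linearRank F x / g) hK
  have hshift (x : β) : (linearRank F x + g * s) / g = linearRank F x / g + s :=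
    Nat.add_mul_div_left _ _ hg
  refine ⟨{x ∈ F | (linearRank F x / g + s) % K ≠ 0}, filter_subset _ _,
    fun x => (linearRank F x + g * s) / (g * K), ?_, fun x hx => ?_, fun b => ?_,
    fun x hx y hy hxy => ?_⟩
  · have hsplit := card_filter_add_card_filter_not (s := F)
      fun x => (linearRank F x / g + s) % K = 0
    rw [← hsplit, mul_add, add_comm, hsplit]
    exact Nat.add_le_add_left hs _
  · have hrank := linearRank_lt_card (mem_filter.1 hx).1
    calc (linearRank F x + g * s) / (g * K) ≤ (#F + g * K) / (g * K) := by gcongr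
      _ < #F / (g * K) + 2 := by
        rw [Nat.add_div_right _ (Nat.mul_pos hg hK)]
        exact Nat.lt_succ_self _
  · refine card_filter_div_eq_le (fun x hx y hy hxy => ?_) (Nat.mul_pos hg hK) b
    exact injOn_linearRank (mem_filter.1 hx).1 (mem_filter.1 hy).1 (Nat.add_right_cancel hxy)
  · obtain ⟨hxF, -⟩ := mem_filter.1 hx
    obtain ⟨hyF, hymod⟩ := mem_filter.1 hy
    have hgap := add_lt_of_div_lt_div hg (by rwa [hshift]) hxy
    refine le_of_linearRank_add_lt (F := F) ?_
    linarith [hdeg x hxF, hdeg y hyF]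

end LayeredBlocks

section LayeredFamilies

variable {α : Type*} [Fintype α] [DecidableEq α]

lemma sum_card_sup_sub_card_inf_le {ι : Type*} [LinearOrder ι] {P : ι → Finset (Finset α)}
    (hP : ∀ i j, i < j → ∀ x ∈ P i, ∀ y ∈ P j, x ⊆ y) (s : Finset ι) :
    ∑ i ∈ s, (#((P i).sup id) - #((P i).inf id)) ≤ Fintype.card α := by
  have hdisj : Pairwise (Function.onFun Disjoint fun i => (P i).sup id \ (P i).inf id) :=
    (pairwise_disjoint_on _).2 fun i j hij => by
      have hle : (P i).sup id ≤ (P j).inf id :=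
        Finset.sup_le fun x hx => Finset.le_inf fun y hy => hP i j hij x hx y hy
      exact disjoint_sdiff.mono_left (sdiff_subset.trans hle)
  calc ∑ i ∈ s, (#((P i).sup id) - #((P i).inf id))
      ≤ ∑ i ∈ s, #((P i).sup id \ (P i).inf id) := sum_le_sum fun i _ => le_card_sdiff _ _
    _ = #(s.biUnion fun i => (P i).sup id \ (P i).inf id) :=
        (card_biUnion (hdisj.set_pairwise _)).symm
    _ ≤ Fintype.card α := card_le_univ _

variable {γ l : ℝ} {k t : ℕ}

lemma card_incompPairs_ge_of_layered {F : Finset (Finset α)} {f : Finset α → ℕ} {M N : ℕ}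
    (hγ : 0 < γ) (hγ1 : γ ≤ 1) (hl : 0 ≤ l) (hM : 0 < M) (hk : 0 < k)
    (hclimb : ∀ d : ℕ, d * l ≤ 2 * M → CanClimb γ M k t d) (hfN : ∀ x ∈ F, f x < N)
    (hsize : ∀ b, #{x ∈ F | f x = b} ≤ M) (hlayer : ∀ x ∈ F, ∀ y ∈ F, f x < f y → x ⊆ y) :
    2 * k * l * (#F - N * (γ * M)) - Fintype.card α * k * l ^ 2 - 2 * (γ * M) * #F ≤
      #(incompPairs F) := by
  set P : ℕ → Finset (Finset α) := fun b => {x ∈ F | f x = b}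
  have hblock (b : ℕ) : 2 * k * l * (#(P b) - γ * M) -
      ((#((P b).sup id) - #((P b).inf id) : ℕ) : ℝ) * k * l ^ 2 - 2 * (γ * M) * #(P b) ≤
        #(incompPairs (P b)) :=
    card_incompPairs_ge_of_subset_Icc hγ hγ1 (by exact_mod_cast hM) hl hk
      (fun x hx => mem_Icc.2 ⟨inf_le (f := id) hx, le_sup (f := id) hx⟩)
      (by exact_mod_cast hsize b) hclimb
  have hpairs : ∑ b ∈ range N, (#(incompPairs (P b)) : ℝ) ≤ #(incompPairs F) := by
    exact_mod_cast sum_card_incompPairs_le (fun b _ => filter_subset _ _)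
      (Set.pairwiseDisjoint_filter f _ _)
  have hdim : (∑ b ∈ range N, ((#((P b).sup id) - #((P b).inf id) : ℕ) : ℝ)) ≤
      Fintype.card α := by
    exact_mod_cast sum_card_sup_sub_card_inf_le (P := P) (fun i j hij x hx y hy => by
      obtain ⟨hxF, rfl⟩ := mem_filter.1 hx
      obtain ⟨hyF, rfl⟩ := mem_filter.1 hy
      exact hlayer x hxF y hyF hij) (range N)
  have hcover : ∑ b ∈ range N, (#(P b) : ℝ) = #F := by
    exact_mod_cast
      (card_eq_sum_card_fiberwise fun x hx => mem_coe.2 (mem_range.2 (hfN x hx))).symm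
  have hsum := (sum_le_sum fun b (_ : b ∈ range N) => hblock b).trans hpairs
  rw [sum_sub_distrib, sum_sub_distrib, ← mul_sum, ← mul_sum, sum_sub_distrib, sum_const,
    nsmul_eq_mul, ← sum_mul, ← sum_mul, hcover, card_range] at hsum
  linarith [mul_le_mul_of_nonneg_right hdim (show 0 ≤ k * l ^ 2 by positivity)]

lemma card_incompPairs_ge_of_card_incomp_le {F : Finset (Finset α)} {g K : ℕ} (hγ : 0 < γ)
    (hγ1 : γ ≤ 1) (hl : 0 ≤ l) (hg : 0 < g) (hK : 0 < K) (hk : 0 < k)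
    (hdeg : ∀ x ∈ F, 2 * #{y ∈ F | IncompRel (· ≤ ·) x y} ≤ g)
    (hclimb : ∀ d : ℕ, d * l ≤ 2 * (g * K : ℕ) → CanClimb γ (g * K : ℕ) k t d) :
    2 * k * l * (#F - 1 / K * #F - γ * (#F + 2 * (g * K : ℕ))) - Fintype.card α * k * l ^ 2 -
      2 * (γ * (g * K : ℕ)) * #F ≤ #(incompPairs F) := by
  obtain ⟨F', hF'F, f, hF', hf, hsize, hlayer⟩ := exists_layered_blocks hg hK hdeg
  set M := g * K
  set N := #F / M + 2
  have hlayered := card_incompPairs_ge_of_layered hγ hγ1 hl (Nat.mul_pos hg hK) hk hclimb hf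
    hsize hlayer
  have hpairs : (#(incompPairs F') : ℝ) ≤ #(incompPairs F) := by
    exact_mod_cast card_le_card (incompPairs_mono hF'F)
  have hcount : (N : ℝ) * M ≤ #F + 2 * M := by
    exact_mod_cast (by rw [add_mul]; gcongr; exact Nat.div_mul_le_self _ _)
  have hkept : (#F : ℝ) - 1 / K * #F ≤ #F' := by
    have hKpos : (0 : ℝ) < K := by exact_mod_cast hK
    have hF'real : (K : ℝ) * #F ≤ K * #F' + #F := by exact_mod_cast hF'
    field_simp
    linarith
  have hmain := mul_le_mul_of_nonneg_left
    (add_le_add hkept (mul_le_mul_of_nonneg_left (neg_le_neg hcount) hγ.le))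
    (show 0 ≤ 2 * k * l by positivity)
  have hlast := mul_le_mul_of_nonneg_left
    (show (#F' : ℝ) ≤ #F by exact_mod_cast card_le_card hF'F)
    (show 0 ≤ 2 * (γ * M) by positivity)
  linarith

end LayeredFamilies

section Asymptotics

open Filter Real

lemma canClimb_of_le {γ M D : ℝ} {k t d : ℕ} (hD : 0 ≤ D) (hd : 4 * 2 ^ d ≤ D ^ (t + 1))
    (hk : D * 2 ^ k ≤ γ * (γ ^ (t + 1) * M / 2)) : CanClimb γ M k t d := by
  calc 4 * ((2 : ℝ) ^ d * (2 ^ k) ^ (t + 1)) = 4 * 2 ^ d * (2 ^ k) ^ (t + 1) := by ring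
    _ ≤ D ^ (t + 1) * (2 ^ k) ^ (t + 1) := by gcongr
    _ = (D * 2 ^ k) ^ (t + 1) := (mul_pow _ _ _).symm
    _ ≤ (γ * (γ ^ (t + 1) * M / 2)) ^ (t + 1) := by gcongr

lemma exists_eventually_canClimb {γ δ C : ℝ} (hγ : 0 < γ) (hδ : 0 < δ) :
    ∃ t : ℕ, ∀ᶠ x : ℝ in atTop, ∀ (M : ℝ) (k d : ℕ), 2 ^ x ≤ M → k ≤ (1 - δ) * x → d ≤ C * x →
      CanClimb γ M k t d := by
  obtain ⟨t, ht⟩ := exists_nat_ge (2 * (C + 1) / δ)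
  have hexp : Tendsto (fun x : ℝ => γ ^ (t + 2) * (2 : ℝ) ^ (δ / 2 * x)) atTop atTop :=
    ((tendsto_rpow_atTop_of_base_gt_one 2 one_lt_two).comp
      (tendsto_id.const_mul_atTop (half_pos hδ))).const_mul_atTop (by positivity)
  refine ⟨t, ?_⟩
  filter_upwards [hexp.eventually_ge_atTop 2, eventually_ge_atTop 2] with x hγx hx M k d hM hk hd
  refine canClimb_of_le (D := 2 ^ (δ / 2 * x)) (by positivity) ?_ ?_
  · have ht' : C + 1 ≤ δ / 2 * (t + 1) := by
      rw [div_le_iff₀ hδ] at ht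
      linarith
    calc 4 * (2 : ℝ) ^ d = 2 ^ (2 + d : ℝ) := by
          rw [rpow_add two_pos, rpow_natCast, rpow_two]
          norm_num
      _ ≤ 2 ^ (δ / 2 * x * (t + 1 : ℕ)) := by
          gcongr
          · exact one_le_two
          · push_cast
            linarith [mul_le_mul_of_nonneg_right ht' (zero_le_two.trans hx)]
      _ = (2 ^ (δ / 2 * x)) ^ (t + 1) := by rw [rpow_mul zero_le_two, rpow_natCast]
  · calc (2 : ℝ) ^ (δ / 2 * x) * 2 ^ k ≤ 2 ^ (x - δ / 2 * x) := by
          rw [← rpow_natCast, ← rpow_add two_pos]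
          gcongr
          · exact one_le_two
          · linarith
      _ = 2 ^ x / 2 ^ (δ / 2 * x) := rpow_sub two_pos _ _
      _ ≤ γ ^ (t + 2) * 2 ^ x / 2 := by
          rw [div_le_div_iff₀ (by positivity) two_pos]
          nlinarith [rpow_pos_of_pos two_pos x]
      _ ≤ γ ^ (t + 2) * M / 2 := by gcongr
      _ = γ * (γ ^ (t + 1) * M / 2) := by ring

lemma one_sub_mul_le_layered_bound {u γ ℓ x n h M k : ℝ} (hu : 0 ≤ u) (hu4 : u ≤ 1 / 4)
    (hγ0 : 0 ≤ γ) (hγ : γ ≤ u) (hℓ : 0 ≤ ℓ) (hx : 0 ≤ x) (hxn : x ≤ n)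
    (hk : (1 - 2 * u) * x ≤ k) (hkx : k ≤ x) (hM0 : 0 ≤ M) (hM : γ * M ≤ u * (ℓ * x))
    (hhn : h ≤ n * ℓ) (hnh : (1 - u) * (n * ℓ) ≤ h) :
    (1 - 14 * u) * (n * ℓ ^ 2 * x) ≤
      2 * k * ℓ * (h - u * h - γ * (h + 2 * M)) - n * k * ℓ ^ 2 - 2 * (γ * M) * h := by
  have hn : 0 ≤ n := hx.trans hxn
  have hk0 : 0 ≤ k := le_trans (mul_nonneg (by linarith) hx) hk
  have hh0 : 0 ≤ h := le_trans (mul_nonneg (by linarith) (by positivity)) hnh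
  have hmain : (1 - 6 * u) * (n * ℓ ^ 2 * x) ≤ 2 * k * ℓ * ((1 - u) * h) - n * k * ℓ ^ 2 := by
    calc (1 - 6 * u) * (n * ℓ ^ 2 * x) ≤ (1 - 6 * u + 8 * u ^ 2) * (n * ℓ ^ 2 * x) := by
          gcongr
          linarith [sq_nonneg u]
      _ = (1 - 4 * u) * (n * ℓ ^ 2) * ((1 - 2 * u) * x) := by ring
      _ ≤ (1 - 4 * u) * (n * ℓ ^ 2) * k :=
          mul_le_mul_of_nonneg_left hk (mul_nonneg (by linarith) (by positivity))
      _ = 2 * k * ℓ * ((1 - 2 * u) * (n * ℓ)) - n * k * ℓ ^ 2 := by ring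
      _ ≤ 2 * k * ℓ * ((1 - u) * ((1 - u) * (n * ℓ))) - n * k * ℓ ^ 2 := by
          gcongr 2 * k * ℓ * ?_ - _
          rw [← mul_assoc (1 - u)]
          gcongr
          linarith [sq_nonneg u]
      _ ≤ 2 * k * ℓ * ((1 - u) * h) - n * k * ℓ ^ 2 := by
          gcongr
          linarith
  have hthreshold : 2 * k * ℓ * (γ * h) ≤ 2 * u * (n * ℓ ^ 2 * x) := by
    calc 2 * k * ℓ * (γ * h) ≤ 2 * x * ℓ * (u * (n * ℓ)) := by gcongr
      _ = 2 * u * (n * ℓ ^ 2 * x) := by ring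
  have hblocks : 4 * k * ℓ * (γ * M) ≤ 4 * u * (n * ℓ ^ 2 * x) := by
    calc 4 * k * ℓ * (γ * M) ≤ 4 * n * ℓ * (u * (ℓ * x)) := by
          have hkn := hkx.trans hxn
          gcongr
      _ = 4 * u * (n * ℓ ^ 2 * x) := by ring
  have hlevels : 2 * (γ * M) * h ≤ 2 * u * (n * ℓ ^ 2 * x) := by
    calc 2 * (γ * M) * h ≤ 2 * (u * (ℓ * x)) * (n * ℓ) := by gcongr
      _ = 2 * u * (n * ℓ ^ 2 * x) := by ring
  linarith

lemma one_sub_two_mul_le_floor {u x : ℝ} (h : 1 ≤ u * x) :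
    (1 - 2 * u) * x ≤ ⌊(1 - u) * x⌋₊ := by
  linarith [Nat.lt_floor_add_one ((1 - u) * x)]

lemma ceil_two_mul_le_three_mul {y : ℝ} (hy : 1 ≤ y) : ⌈2 * y⌉₊ ≤ 3 * y := by
  linarith [Nat.ceil_lt_add_one (show 0 ≤ 2 * y by linarith)]

lemma ceil_two_mul_mul_mem_Icc {K : ℕ} {ℓ x : ℝ} (hK : 1 ≤ K) (hℓ : 1 ≤ ℓ) (hx : 1 ≤ x) :
    ((⌈2 * (K * ℓ * x)⌉₊ * K : ℕ) : ℝ) ∈ Set.Icc ℓ (3 * K ^ 2 * (ℓ * x)) := by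
  have hK1 : (1 : ℝ) ≤ K := by exact_mod_cast hK
  have hℓy : ℓ ≤ K * ℓ * x := by
    rw [mul_right_comm]
    exact le_mul_of_one_le_left (by linarith) (one_le_mul_of_one_le_of_one_le hK1 hx)
  rw [Nat.cast_mul]
  constructor
  · calc ℓ ≤ ⌈2 * (K * ℓ * x)⌉₊ := le_trans (by linarith) (Nat.le_ceil _)
      _ ≤ ⌈2 * (K * ℓ * x)⌉₊ * K := le_mul_of_one_le_right (by positivity) hK1
  · calc (⌈2 * (K * ℓ * x)⌉₊ : ℝ) * K ≤ 3 * (K * ℓ * x) * K := by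
          gcongr
          exact ceil_two_mul_le_three_mul (hℓ.trans hℓy)
      _ = 3 * K ^ 2 * (ℓ * x) := by ring

lemma card_incompPairs_ge_of_forall_canClimb {α : Type*} [Fintype α] [DecidableEq α]
    {F : Finset (Finset α)} {K t : ℕ} {ℓ x : ℝ} (hK : 4 ≤ K) (hℓ : 1 ≤ ℓ) (hKx : K ≤ x)
    (hxn : x ≤ Fintype.card α) (hFn : #F ≤ Fintype.card α * ℓ)
    (hnF : (1 - 1 / K) * (Fintype.card α * ℓ) ≤ #F)
    (hdeg : ∀ A ∈ F, #{B ∈ F | IncompRel (· ≤ ·) A B} ≤ K * ℓ * x)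
    (hclimb : ∀ (M : ℝ) (k d : ℕ), ℓ ≤ M → k ≤ (1 - 1 / K) * x → d ≤ 6 * K ^ 2 * x →
      CanClimb (1 / (3 * K ^ 3)) M k t d) :
    (1 - 14 * (1 / K)) * (Fintype.card α * ℓ ^ 2 * x) ≤ #(incompPairs F) := by
  have hK4 : (4 : ℝ) ≤ K := by exact_mod_cast hK
  have hKinv : 1 / (K : ℝ) ≤ 1 / 4 := by gcongr
  have hKinv0 : 0 < 1 / (K : ℝ) := by positivity
  have hγ : 1 / (3 * (K : ℝ) ^ 3) ≤ 1 / K := by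
    gcongr
    linarith [le_self_pow₀ (show 1 ≤ (K : ℝ) by linarith) three_ne_zero]
  have hk : ⌊(1 - 1 / (K : ℝ)) * x⌋₊ ≤ (1 - 1 / K) * x :=
    Nat.floor_le (mul_nonneg (by linarith) (by linarith))
  have hk' := one_sub_two_mul_le_floor (u := 1 / (K : ℝ)) (x := x)
    (by rwa [one_div_mul_eq_div, one_le_div (by linarith)])
  set k := ⌊(1 - 1 / (K : ℝ)) * x⌋₊
  have hk0 : (0 : ℝ) < k := (mul_pos (by linarith) (by linarith)).trans_le hk'
  obtain ⟨hℓM, hM⟩ := ceil_two_mul_mul_mem_Icc (K := K) (by omega) hℓ (show 1 ≤ x by linarith)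
  set g := ⌈2 * (K * ℓ * x)⌉₊
  have hg : 2 * (K * ℓ * x) ≤ g := Nat.le_ceil _
  refine le_trans ?_ (card_incompPairs_ge_of_card_incomp_le (γ := 1 / (3 * K ^ 3)) (l := ℓ)
    (g := g) (K := K) (k := k) (t := t) (by positivity) (by linarith) (by linarith) ?_ (by omega)
    (by exact_mod_cast hk0) (fun A hA => ?_) fun d hd => hclimb _ k d hℓM hk ?_)
  · refine one_sub_mul_le_layered_bound (by positivity) hKinv (by positivity) hγ (by linarith)
      (by linarith) hxn hk' (hk.trans ?_) (by positivity) ?_ hFn hnF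
    · exact mul_le_of_le_one_left (by linarith) (by linarith)
    · calc 1 / (3 * (K : ℝ) ^ 3) * (g * K : ℕ) ≤ 1 / (3 * K ^ 3) * (3 * K ^ 2 * (ℓ * x)) := by
            gcongr
        _ = 1 / K * (ℓ * x) := by field_simp
  · exact Nat.ceil_pos.2 (mul_pos two_pos (mul_pos (mul_pos (by linarith) (by linarith))
      (by linarith)))
  · exact_mod_cast (show (2 : ℝ) * #{B ∈ F | IncompRel (· ≤ ·) A B} ≤ g by linarith [hdeg A hA])
  · refine le_of_mul_le_mul_right (hd.trans ?_) (zero_lt_one.trans_le hℓ)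
    linarith

lemma eventually_card_incompPairs_ge_of_card_incomp_le {K : ℕ} (hK : 4 ≤ K) :
    ∀ᶠ ℓ : ℕ in atTop, ∀ (n : ℕ) (F : Finset (Finset (Fin n))), logb 2 ℓ ≤ n →
      (#F : ℝ) ≤ n * ℓ → (1 - 1 / K) * (n * ℓ : ℝ) ≤ #F →
      (∀ A ∈ F, #{B ∈ F | IncompRel (· ≤ ·) A B} ≤ K * ℓ * logb 2 ℓ) →
      (1 - 14 * (1 / K)) * (n * ℓ ^ 2 * logb 2 ℓ) ≤ #(incompPairs F) := by
  have hK0 : (0 : ℝ) < K := by exact_mod_cast (by omega : 0 < K)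
  obtain ⟨t, ht⟩ := exists_eventually_canClimb (γ := 1 / (3 * K ^ 3)) (δ := 1 / K)
    (C := 6 * K ^ 2) (by positivity) (one_div_pos.2 hK0)
  have hlog : Tendsto (fun ℓ : ℕ => logb 2 ℓ) atTop atTop :=
    (tendsto_logb_atTop one_lt_two).comp tendsto_natCast_atTop_atTop
  filter_upwards [hlog.eventually ht, hlog.eventually_ge_atTop (K : ℝ), eventually_ge_atTop 1]
    with ℓ hclimb hKx hℓ n F hxn hFn hnF hdeg
  rw [rpow_logb two_pos one_lt_two.ne' (by exact_mod_cast hℓ)] at hclimb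
  simpa only [Fintype.card_fin] using card_incompPairs_ge_of_forall_canClimb hK
    (by exact_mod_cast hℓ) hKx (by rwa [Fintype.card_fin]) (by rwa [Fintype.card_fin])
    (by rwa [Fintype.card_fin]) hdeg hclimb

lemma eventually_card_incompPairs_ge {K : ℕ} (hK : 4 ≤ K) :
    ∀ᶠ ℓ : ℕ in atTop, ∀ (n : ℕ) (F : Finset (Finset (Fin n))), #F = n * ℓ →
      (1 - 14 * (1 / K)) * (n * ℓ ^ 2 * logb 2 ℓ) ≤ #(incompPairs F) := by
  have hK0 : (0 : ℝ) < K := by exact_mod_cast (by omega : 0 < K)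
  filter_upwards [eventually_card_incompPairs_ge_of_card_incomp_le hK, eventually_ge_atTop 1]
    with ℓ hsparse hℓ n F hF
  have hFreal : (#F : ℝ) = n * ℓ := by exact_mod_cast hF
  have hx : 0 ≤ logb 2 ℓ := logb_nonneg one_lt_two (by exact_mod_cast hℓ)
  have hpos : 0 ≤ n * (ℓ : ℝ) ^ 2 * logb 2 ℓ := by positivity
  rcases n.eq_zero_or_pos with rfl | hn
  · simp
  have hxn : logb 2 ℓ ≤ n := by
    have hpow : ℓ ≤ 2 ^ n := by
      calc ℓ ≤ #F := hF ▸ Nat.le_mul_of_pos_left ℓ hn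
        _ ≤ 2 ^ n := by simpa using card_le_univ F
    rw [logb_le_iff_le_rpow one_lt_two (by exact_mod_cast hℓ), rpow_natCast]
    exact_mod_cast hpow
  set high := {A ∈ F | K * ℓ * logb 2 ℓ < #{B ∈ F | IncompRel (· ≤ ·) A B}}
  set low := {A ∈ F | ¬ K * ℓ * logb 2 ℓ < #{B ∈ F | IncompRel (· ≤ ·) A B}}
  have hsplit : (#high : ℝ) + #low = #F := by
    exact_mod_cast card_filter_add_card_filter_not _
  rcases le_or_gt (1 / K * (n * ℓ) : ℝ) #high with hmany | hfew
  · have hdeg : #high * (K * ℓ * logb 2 ℓ) ≤ #(incompPairs F) :=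
      card_mul_le_card_incompPairs (filter_subset _ _) fun A hA => (mem_filter.1 hA).2.le
    calc (1 - 14 * (1 / K)) * (n * ℓ ^ 2 * logb 2 ℓ) ≤ n * ℓ ^ 2 * logb 2 ℓ :=
          mul_le_of_le_one_left hpos (by linarith [one_div_pos.2 hK0])
      _ = 1 / K * (n * ℓ) * (K * ℓ * logb 2 ℓ) := by field_simp
      _ ≤ #high * (K * ℓ * logb 2 ℓ) := by gcongr
      _ ≤ #(incompPairs F) := hdeg
  · refine (hsparse n low hxn ?_ ?_ fun A hA => ?_).trans ?_
    · exact hFreal ▸ by exact_mod_cast card_filter_le _ _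
    · linarith
    · refine le_trans ?_ (not_lt.1 (mem_filter.1 hA).2)
      exact_mod_cast card_le_card (filter_subset_filter _ (filter_subset _ _))
    · exact_mod_cast card_le_card (incompPairs_mono (filter_subset _ _))

end Asymptotics

lemma two_mul_incompCount {n : ℕ} (ℱ : Finset (Finset (Fin n))) :
    2 * incompCount ℱ = #(incompPairs ℱ) := by
  have hcount : #(incompPairs ℱ) + 2 * compCount ℱ = 2 * (#ℱ).choose 2 :=
    card_incompPairs_add_two_mul_card_lt ℱ
  rw [incompCount]
  omega

theorem stmt9_general (ε : ℝ) (hε : 0 < ε) :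
    ∃ ℓ₀ : ℕ, ∀ ℓ ≥ ℓ₀, ∀ n : ℕ, ∀ ℱ : Finset (Finset (Fin n)), #ℱ = n * ℓ →
      (1 / 2 - ε) * n * (ℓ : ℝ) ^ 2 * Real.logb 2 ℓ ≤ incompCount ℱ := by
  obtain ⟨K, hK⟩ := exists_nat_ge (max 4 (7 / ε))
  have hK4 : 4 ≤ K := by exact_mod_cast (le_max_left _ _).trans hK
  have hKε : 7 / ε ≤ K := (le_max_right _ _).trans hK
  obtain ⟨ℓ₀, hℓ₀⟩ := Filter.eventually_atTop.1
    ((eventually_card_incompPairs_ge hK4).and (Filter.eventually_ge_atTop 1))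
  refine ⟨ℓ₀, fun ℓ hℓ n ℱ hcard => ?_⟩
  obtain ⟨hpairs, hℓ1⟩ := hℓ₀ ℓ hℓ
  have hcount : (2 : ℝ) * incompCount ℱ = #(incompPairs ℱ) := by
    exact_mod_cast two_mul_incompCount ℱ
  have hlog : 0 ≤ Real.logb 2 ℓ := Real.logb_nonneg one_lt_two (by exact_mod_cast hℓ1)
  have hε14 : 14 * (1 / (K : ℝ)) ≤ 2 * ε := by
    rw [div_le_iff₀ hε] at hKε
    rw [mul_one_div, div_le_iff₀ (by exact_mod_cast (by omega : 0 < K))]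
    linarith
  linarith [hpairs n ℱ hcard, mul_le_mul_of_nonneg_right (sub_le_sub_left hε14 1)
    (show 0 ≤ n * (ℓ : ℝ) ^ 2 * Real.logb 2 ℓ by positivity)]

theorem stmt9 (ε : ℝ) (hε : 0 < ε) :
    ∃ ℓ₀ n₀ : ℕ, ∀ ℓ ≥ ℓ₀, ∀ n ≥ n₀,
      ∀ ℱ : Finset (Finset (Fin n)), ℱ.card = n * ℓ →
        (∀ F ∈ ℱ, ((ℱ.filter (fun G => ¬(F ⊆ G ∨ G ⊆ F))).card : ℝ) ≤ 4 * ℓ * Real.logb 2 ℓ) →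
        (1 / 2 - ε) * n * (ℓ : ℝ) ^ 2 * Real.logb 2 ℓ ≤ (incompCount ℱ : ℝ) := by
  obtain ⟨ℓ₀, h⟩ := stmt9_general ε hε
  exact ⟨ℓ₀, 0, fun ℓ hℓ n _ ℱ hcard _ => h ℓ hℓ n ℱ hcard⟩
end

section
/- Let n be even, let k be an integer with n/3 + √(2n·ln 2) ≤ k < n/2, and let m = M_{k−1} + m' where 0 ≤ m' ≤ 2·binom(n/2, k). Fix a set X ⊆ [n] with |X| = n/2, let 𝒜 be any family of ⌊m'/2⌋ k-element subsets of X, let ℬ be any family of ⌈m'/2⌉ sets of size n−k containing X, and let ℱ*_m = ℋ_{k−1} ∪ 𝒜 ∪ ℬ. Then c(n,m) = c(ℱ*_m); that is, every family 𝒢 of m subsets of [n] satisfies c(𝒢) ≤ c(ℱ*_m). -/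
open Finset

/-- `maxComp n m` is `c(n,m)`, the maximum number of comparable pairs over all families of
`m` subsets of `[n]`. -/
def maxComp (n m : ℕ) : ℕ :=
  ((Finset.univ : Finset (Finset (Fin n))).powersetCard m).sup compCount

/-- `Hfam n k = ℋ_k` is the family of subsets of `[n]` of size at most `k` or at least `n - k`. -/
def Hfam (n k : ℕ) : Finset (Finset (Fin n)) :=
  Finset.univ.filter (fun F => F.card ≤ k ∨ n - k ≤ F.card)

/-- `Mnum n k = M_k = |ℋ_k|`. -/
def Mnum (n k : ℕ) : ℕ := (Hfam n k).card

/-!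
Put `d = 2 ^ (n - k) + 2 ^ k`. A set outside `ℋ_{k-1}` has size between `k` and `n - k`, so by
convexity of `x ↦ 2 ^ (n - x) + 2 ^ x` it is comparable to at most `d` sets. By Chebyshev's
inequality for the binomial distribution, every member of `ℋ_{k-1}` is comparable to at least `d`
members of `ℋ_{k-2}`, and every member of `ℋ_{k-2}` to at least `2 * d` of them; the factor `2`
compensates for a pair of new sets being counted from both ends. Hence exchanging members of
a family outside `ℋ_{k-1}` for the missing members of `ℋ_{k-1}` never loses comparable pairs, and
an optimal family may be taken of the form `ℋ_{k-1} ∪ 𝒬`.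

All sets of size `k` or `n - k` have the same number of comparable sets in `ℋ_{k-1}`, and by
Chebyshev again a set of intermediate size has no more comparable sets in total. What remains are
the pairs between the two layers of `𝒬`, at most `a * b` with `a + b ≤ #𝒬`. The product is largest
when `a` and `b` differ by at most one, and it is attained when every set of the lower layer lies
in every set of the upper layer.
-/

section BinomialSums

theorem sum_range_choose_mul_sq (N : ℕ) :
    ∑ i ∈ range (N + 1), (N.choose i : ℚ) * (2 * i - N) ^ 2 = (N : ℚ) * 2 ^ N := by
  have hvar := congrArg (Polynomial.eval (1 / 2 : ℚ)) (bernsteinPolynomial.variance ℚ N)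
  simp only [bernsteinPolynomial, Polynomial.eval_finsetSum, Polynomial.eval_mul,
    Polynomial.eval_pow, Polynomial.eval_sub, Polynomial.eval_X, Polynomial.eval_natCast,
    Polynomial.eval_one, nsmul_eq_mul, sub_half] at hvar
  have hpow : ∀ i ∈ range (N + 1), (2 : ℚ) ^ N * ((1 / 2) ^ i * (1 / 2) ^ (N - i)) = 1 := by
    intro i hi
    rw [← pow_add, Nat.add_sub_cancel' (mem_range_succ_iff.1 hi), ← mul_pow]
    norm_num
  calc ∑ i ∈ range (N + 1), (N.choose i : ℚ) * (2 * i - N) ^ 2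
      = ∑ i ∈ range (N + 1), 4 * 2 ^ N *
          ((N * (1 / 2) - i) ^ 2 * ((N.choose i : ℚ) * (1 / 2) ^ i * (1 / 2) ^ (N - i))) :=
        sum_congr rfl fun i hi => by
          linear_combination -((N.choose i : ℚ) * (2 * i - N) ^ 2) * hpow i hi
    _ = (N : ℚ) * 2 ^ N := by
        rw [← mul_sum, hvar]
        ring

theorem mul_two_pow_le_mul_sum_choose_add {N r t q : ℕ} (hN : N ≠ 0) (ht : N + t ≤ 2 * r)
    (hq : q * N ≤ t ^ 2) : q * 2 ^ N ≤ q * ∑ i ∈ range r, N.choose i + 2 ^ N := by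
  set tail := ∑ i ∈ range (N + 1) with ¬ i < r, N.choose i with htail
  have htotal : 2 ^ N ≤ ∑ i ∈ range r, N.choose i + tail := by
    rw [← Nat.sum_range_choose, ← sum_filter_add_sum_filter_not (range (N + 1)) (· < r)]
    gcongr
    exact fun i hi => by simpa using (mem_filter.1 hi).2
  have hmarkov : (N : ℚ) * (q * tail) ≤ N * 2 ^ N := by
    calc (N : ℚ) * (q * tail)
        = ∑ i ∈ range (N + 1) with ¬ i < r, (N.choose i : ℚ) * (q * N) := by
          rw [← sum_mul, htail]; push_cast; ring
      _ ≤ ∑ i ∈ range (N + 1) with ¬ i < r, (N.choose i : ℚ) * (2 * i - N) ^ 2 := by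
          gcongr with i hi
          have hri : r ≤ i := not_lt.1 (mem_filter.1 hi).2
          have hti : (t : ℚ) ≤ 2 * i - N := by
            rw [le_sub_iff_add_le]; exact_mod_cast (by omega : t + N ≤ 2 * i)
          calc (q * N : ℚ) ≤ t ^ 2 := mod_cast hq
            _ ≤ (2 * i - N) ^ 2 := by gcongr
      _ ≤ ∑ i ∈ range (N + 1), (N.choose i : ℚ) * (2 * i - N) ^ 2 :=
          sum_le_sum_of_subset_of_nonneg (filter_subset _ _) fun _ _ _ => by positivity
      _ = N * 2 ^ N := sum_range_choose_mul_sq N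
  have hsmall : q * tail ≤ 2 ^ N := by
    exact_mod_cast le_of_mul_le_mul_left hmarkov (by positivity)
  calc q * 2 ^ N ≤ q * (∑ i ∈ range r, N.choose i + tail) := by gcongr
    _ ≤ q * ∑ i ∈ range r, N.choose i + 2 ^ N := by rw [mul_add]; gcongr

theorem card_powerset_filter_card_lt {α : Type*} (G : Finset α) (r : ℕ) :
    #{B ∈ G.powerset | #B < r} = ∑ i ∈ range r, (#G).choose i := by
  rw [card_eq_sum_card_fiberwise (f := card) (t := range r) fun B hB => by simp_all]
  refine sum_congr rfl fun i hi => ?_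
  rw [← card_powersetCard, filter_filter, powersetCard_eq_filter]
  exact congrArg card (filter_congr fun B _ => by grind)

theorem two_pow_sub_add_two_pow_le {n a g : ℕ} (hag : a ≤ g) (hga : g + a ≤ n) :
    2 ^ (n - g) + 2 ^ g ≤ 2 ^ (n - a) + 2 ^ a := by
  obtain ⟨d, rfl⟩ := Nat.exists_eq_add_of_le hag
  obtain ⟨e, rfl⟩ := Nat.exists_eq_add_of_le hga
  have hd : 1 ≤ 2 ^ d := Nat.one_le_two_pow
  have he : 1 ≤ 2 ^ e := Nat.one_le_two_pow
  calc 2 ^ (a + d + a + e - (a + d)) + 2 ^ (a + d) = 2 ^ a * (2 ^ e + 2 ^ d) := by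
        rw [show a + d + a + e - (a + d) = a + e by omega, pow_add, pow_add, mul_add]
    _ ≤ 2 ^ a * (2 ^ e * 2 ^ d + 1) := Nat.mul_le_mul_left _ (by nlinarith)
    _ = 2 ^ (a + d + a + e - a) + 2 ^ a := by
        rw [show a + d + a + e - a = a + (e + d) by omega, pow_add, pow_add, mul_add, mul_one]

theorem mul_le_mul_of_add_le_of_balanced {a b x y : ℕ} (h : a + b ≤ x + y) (hxy : x ≤ y + 1)
    (hyx : y ≤ x + 1) : a * b ≤ x * y := by
  have hsq : (a + b) ^ 2 ≤ (x + y) ^ 2 := by gcongr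
  zify at *
  nlinarith [sq_nonneg ((a : ℤ) - b)]

end BinomialSums

section ComparablePairs

variable {n : ℕ} {ℱ 𝒢 ℋ 𝒬 : Finset (Finset (Fin n))} {G : Finset (Fin n)}

/-- `compDegree ℱ G` is the degree of `G` in the comparability graph of `ℱ ∪ {G}`: the number of
members of `ℱ` that are comparable to `G` and distinct from it. -/
def compDegree (ℱ : Finset (Finset (Fin n))) (G : Finset (Fin n)) : ℕ :=
  #{B ∈ ℱ | G ⊂ B} + #{B ∈ ℱ | B ⊂ G}

theorem compDegree_mono (h : ℱ ⊆ 𝒢) (G : Finset (Fin n)) : compDegree ℱ G ≤ compDegree 𝒢 G := by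
  unfold compDegree
  gcongr

theorem compDegree_union (h : Disjoint ℱ 𝒬) (G : Finset (Fin n)) :
    compDegree (ℱ ∪ 𝒬) G = compDegree ℱ G + compDegree 𝒬 G := by
  simp only [compDegree, card_filter, sum_union h]
  ring

theorem compDegree_le_of_card {a : ℕ} (haG : a ≤ #G) (hGa : #G + a ≤ n) :
    compDegree ℱ G ≤ 2 ^ (n - a) + 2 ^ a := by
  have hsup : #{B ∈ ℱ | G ⊂ B} ≤ 2 ^ (n - #G) := by
    have hIcc : {B ∈ ℱ | G ⊂ B} ⊆ Icc G univ := fun B hB =>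
      mem_Icc.2 ⟨(mem_filter.1 hB).2.le, subset_univ B⟩
    simpa only [card_Icc_finset (subset_univ G), card_fin] using card_le_card hIcc
  have hsub : #{B ∈ ℱ | B ⊂ G} ≤ 2 ^ #G := by
    rw [← card_powerset]
    exact card_le_card fun B hB => mem_powerset.2 (mem_filter.1 hB).2.subset
  exact (add_le_add hsup hsub).trans (two_pow_sub_add_two_pow_le haG hGa)

theorem crossComp_eq_sum (ℱ 𝒢 : Finset (Finset (Fin n))) :
    crossComp ℱ 𝒢 = ∑ A ∈ ℱ, ∑ B ∈ 𝒢, if A ⊂ B then 1 else 0 := by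
  rw [crossComp, card_filter, sum_product]

theorem sum_compDegree (ℱ 𝒬 : Finset (Finset (Fin n))) :
    ∑ G ∈ 𝒬, compDegree ℱ G = crossComp 𝒬 ℱ + crossComp ℱ 𝒬 := by
  simp only [crossComp_eq_sum, sum_comm (s := ℱ), ← sum_add_distrib, compDegree, card_filter]

theorem sum_compDegree_self (𝒬 : Finset (Finset (Fin n))) :
    ∑ G ∈ 𝒬, compDegree 𝒬 G = 2 * compCount 𝒬 := by
  rw [sum_compDegree, compCount, two_mul]

theorem compCount_union (h : Disjoint ℱ 𝒬) :
    compCount (ℱ ∪ 𝒬) = compCount ℱ + ∑ G ∈ 𝒬, compDegree ℱ G + compCount 𝒬 := by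
  rw [sum_compDegree]
  simp only [compCount, crossComp_eq_sum, sum_union h, sum_add_distrib]
  ring

theorem compCount_union_le (h : Disjoint ℱ 𝒬) :
    compCount (ℱ ∪ 𝒬) ≤ compCount ℱ + ∑ G ∈ 𝒬, compDegree (ℱ ∪ 𝒬) G := by
  simp only [compCount_union h, compDegree_union h, sum_add_distrib, sum_compDegree_self]
  omega

theorem card_mul_card_le_compCount_union {𝒜 ℬ : Finset (Finset (Fin n))}
    (h : ∀ A ∈ 𝒜, ∀ B ∈ ℬ, A ⊂ B) : #𝒜 * #ℬ ≤ compCount (𝒜 ∪ ℬ) := by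
  rw [← card_product]
  refine card_le_card fun p hp => ?_
  obtain ⟨hA, hB⟩ := mem_product.1 hp
  exact mem_filter.2 ⟨mem_product.2 ⟨mem_union_left _ hA, mem_union_right _ hB⟩, h _ hA _ hB⟩

theorem compCount_le_card_mul_card {x y : ℕ} (hxy : x ≤ y) (h : ∀ G ∈ ℱ, #G = x ∨ #G = y) :
    compCount ℱ ≤ #{G ∈ ℱ | #G = x} * #{G ∈ ℱ | #G = y} := by
  rw [← card_product]
  refine card_le_card fun p hp => ?_
  obtain ⟨hmem, hlt⟩ := mem_filter.1 hp
  obtain ⟨hA, hB⟩ := mem_product.1 hmem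
  have hcard := card_lt_card hlt
  have := h _ hA
  have := h _ hB
  simp only [mem_product, mem_filter, hA, hB, true_and]
  omega

theorem compCount_union_le_of_two_layers {x y D : ℕ} (hxy : x < y) (hdisj : Disjoint ℋ 𝒬)
    (hlayer : ∀ G ∈ 𝒬, #G = x ∨ #G = y → compDegree ℋ G ≤ D)
    (hother : ∀ G ∈ 𝒬, ¬ (#G = x ∨ #G = y) → compDegree (ℋ ∪ 𝒬) G ≤ D) :
    ∃ a b, a + b ≤ #𝒬 ∧ compCount (ℋ ∪ 𝒬) ≤ compCount ℋ + #𝒬 * D + a * b := by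
  set ℒ := {G ∈ 𝒬 | #G = x ∨ #G = y}
  set ℛ := {G ∈ 𝒬 | ¬ (#G = x ∨ #G = y)}
  have hLR : ℒ ∪ ℛ = 𝒬 := filter_union_filter_not_eq _ _
  have hLRdisj : Disjoint ℒ ℛ := disjoint_filter_filter_not _ _ _
  obtain ⟨hHL, hHR⟩ := disjoint_union_right.1 (hLR ▸ hdisj)
  have hcard : #ℒ + #ℛ = #𝒬 := by rw [← card_union_of_disjoint hLRdisj, hLR]
  have hlayers : #{G ∈ ℒ | #G = x} + #{G ∈ ℒ | #G = y} ≤ #ℒ := by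
    rw [← card_union_of_disjoint (disjoint_filter.2 fun _ _ => by omega)]
    exact card_le_card (union_subset (filter_subset _ _) (filter_subset _ _))
  refine ⟨#{G ∈ ℒ | #G = x}, #{G ∈ ℒ | #G = y}, by omega, ?_⟩
  have hsumL : ∑ G ∈ ℒ, compDegree ℋ G ≤ #ℒ * D :=
    sum_le_card_nsmul _ _ _ fun G hG => by
      obtain ⟨hGQ, hGxy⟩ := mem_filter.1 hG
      exact hlayer G hGQ hGxy
  have hsumR : ∑ G ∈ ℛ, compDegree (ℋ ∪ 𝒬) G ≤ #ℛ * D :=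
    sum_le_card_nsmul _ _ _ fun G hG => by
      obtain ⟨hGQ, hGxy⟩ := mem_filter.1 hG
      exact hother G hGQ hGxy
  have hcountL : compCount ℒ ≤ #{G ∈ ℒ | #G = x} * #{G ∈ ℒ | #G = y} :=
    compCount_le_card_mul_card hxy.le fun _ hG => (mem_filter.1 hG).2
  have hsplit : ℋ ∪ 𝒬 = ℋ ∪ ℒ ∪ ℛ := by rw [union_assoc, hLR]
  calc compCount (ℋ ∪ 𝒬) ≤ compCount (ℋ ∪ ℒ) + ∑ G ∈ ℛ, compDegree (ℋ ∪ 𝒬) G := by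
        rw [hsplit]
        exact compCount_union_le (disjoint_union_left.2 ⟨hHR, hLRdisj⟩)
    _ ≤ compCount ℋ + (#ℒ + #ℛ) * D + #{G ∈ ℒ | #G = x} * #{G ∈ ℒ | #G = y} := by
        rw [compCount_union hHL, add_mul]
        omega
    _ = _ := by rw [hcard]

theorem compCount_add_card_sdiff_mul_le {d : ℕ} (hd : ∀ G ∈ ℱ, 2 * d ≤ compDegree ℱ G)
    (𝒢 : Finset (Finset (Fin n))) :
    compCount 𝒢 + #(ℱ \ 𝒢) * d ≤ compCount (𝒢 ∪ ℱ) := by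
  have hdisj : Disjoint 𝒢 (ℱ \ 𝒢) := disjoint_sdiff
  have hdeg : #(ℱ \ 𝒢) * (2 * d) ≤ ∑ G ∈ ℱ \ 𝒢, compDegree (𝒢 ∪ ℱ \ 𝒢) G :=
    card_nsmul_le_sum _ _ _ fun G hG => (hd G (mem_sdiff.1 hG).1).trans
      (compDegree_mono (by rw [union_sdiff_self_eq_union]; exact subset_union_right) G)
  simp only [compDegree_union hdisj, sum_add_distrib, sum_compDegree_self,
    mul_left_comm _ 2 d] at hdeg
  rw [← union_sdiff_self_eq_union, compCount_union hdisj]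
  omega

theorem compCount_add_card_sdiff_mul_le_of_subset {d : ℕ} (hFH : ℱ ⊆ ℋ)
    (hF : ∀ G ∈ ℱ, 2 * d ≤ compDegree ℱ G) (hH : ∀ G ∈ ℋ, d ≤ compDegree ℱ G)
    (𝒢 : Finset (Finset (Fin n))) :
    compCount 𝒢 + #(ℋ \ 𝒢) * d ≤ compCount (𝒢 ∪ ℋ) := by
  have hunion : 𝒢 ∪ ℋ = 𝒢 ∪ ℱ ∪ (ℋ \ (𝒢 ∪ ℱ)) := by
    rw [union_sdiff_self_eq_union, union_assoc, union_eq_right.2 hFH]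
  have hcard : #(ℋ \ 𝒢) = #(ℱ \ 𝒢) + #(ℋ \ (𝒢 ∪ ℱ)) := by
    rw [← card_union_of_disjoint (disjoint_of_subset_left
      (sdiff_subset.trans subset_union_right) disjoint_sdiff)]
    congr 1
    ext G
    have := @hFH G
    simp only [mem_sdiff, mem_union]
    tauto
  have hdeg : #(ℋ \ (𝒢 ∪ ℱ)) * d ≤ ∑ G ∈ ℋ \ (𝒢 ∪ ℱ), compDegree (𝒢 ∪ ℱ) G :=
    card_nsmul_le_sum _ _ _ fun G hG =>
      (hH G (mem_sdiff.1 hG).1).trans (compDegree_mono subset_union_right G)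
  have hinner := compCount_add_card_sdiff_mul_le hF 𝒢
  rw [hunion, compCount_union disjoint_sdiff, hcard, add_mul]
  omega

theorem exists_disjoint_compCount_le_union {d m : ℕ} (hFH : ℱ ⊆ ℋ)
    (hF : ∀ G ∈ ℱ, 2 * d ≤ compDegree ℱ G) (hH : ∀ G ∈ ℋ, d ≤ compDegree ℱ G)
    (hout : ∀ G ∉ ℋ, compDegree univ G ≤ d) (hcard : #𝒢 = #ℋ + m) :
    ∃ 𝒬, #𝒬 = m ∧ Disjoint ℋ 𝒬 ∧ compCount 𝒢 ≤ compCount (ℋ ∪ 𝒬) := by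
  have hcards := card_sdiff_add_card 𝒢 ℋ
  have hcards' := card_sdiff_add_card ℋ 𝒢
  rw [union_comm] at hcards'
  obtain ⟨𝒬, hQsub, hQcard⟩ := exists_subset_card_eq (show m ≤ #(𝒢 \ ℋ) by omega)
  have hHQ : Disjoint ℋ 𝒬 := disjoint_of_subset_right hQsub disjoint_sdiff
  refine ⟨𝒬, hQcard, hHQ, ?_⟩
  set ℛ := (𝒢 \ ℋ) \ 𝒬 with hℛ
  have hRcard : #ℛ = #(ℋ \ 𝒢) := by rw [card_sdiff_of_subset hQsub]; omega
  have hHR : Disjoint ℋ ℛ := disjoint_of_subset_right sdiff_subset disjoint_sdiff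
  have hunion : 𝒢 ∪ ℋ = ℋ ∪ 𝒬 ∪ ℛ := by
    rw [union_assoc, hℛ, union_sdiff_of_subset hQsub, union_sdiff_self_eq_union, union_comm]
  have hdeg : ∑ G ∈ ℛ, compDegree (ℋ ∪ 𝒬 ∪ ℛ) G ≤ #ℛ * d :=
    sum_le_card_nsmul _ _ _ fun G hG =>
      (compDegree_mono (subset_univ _) G).trans (hout G (disjoint_right.1 hHR hG))
  have hgain := compCount_add_card_sdiff_mul_le_of_subset hFH hF hH 𝒢
  have hloss := compCount_union_le (disjoint_union_left.2 ⟨hHR, disjoint_sdiff⟩ :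
    Disjoint (ℋ ∪ 𝒬) ℛ)
  rw [hunion, ← hRcard] at hgain
  omega

theorem maxComp_eq_compCount
    (hmax : ∀ 𝒢 : Finset (Finset (Fin n)), #𝒢 = #ℱ → compCount 𝒢 ≤ compCount ℱ) :
    maxComp n #ℱ = compCount ℱ :=
  le_antisymm (Finset.sup_le fun 𝒢 h𝒢 => hmax 𝒢 (mem_powersetCard.1 h𝒢).2)
    (le_sup (f := compCount) (mem_powersetCard.2 ⟨subset_univ ℱ, rfl⟩))

end ComparablePairs

section OuterLayers

variable {n j : ℕ} {F G : Finset (Fin n)}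

theorem mem_Hfam : F ∈ Hfam n j ↔ #F ≤ j ∨ n ≤ #F + j := by
  simp [Hfam]

theorem Hfam_mono {i : ℕ} (h : i ≤ j) : Hfam n i ⊆ Hfam n j := fun F => by
  simp only [mem_Hfam]
  omega

theorem compl_mem_Hfam : Fᶜ ∈ Hfam n j ↔ F ∈ Hfam n j := by
  have := card_finset_fin_le F
  simp only [mem_Hfam, card_compl, Fintype.card_fin]
  omega

theorem compDegree_Hfam_compl : compDegree (Hfam n j) Gᶜ = compDegree (Hfam n j) G := by
  have hswap (K : Finset (Fin n)) :
      #{B ∈ Hfam n j | Kᶜ ⊂ B} = #{B ∈ Hfam n j | B ⊂ K} := by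
    refine card_nbij' compl compl ?_ ?_ (fun _ _ => compl_compl _) fun _ _ => compl_compl _
    · intro B hB
      rw [mem_coe, mem_filter] at hB ⊢
      rw [compl_mem_Hfam, ← compl_ssubset_compl, compl_compl]
      exact hB
    · intro B hB
      rw [mem_coe, mem_filter] at hB ⊢
      rwa [compl_mem_Hfam, compl_ssubset_compl]
  rw [compDegree, compDegree, hswap, ← hswap Gᶜ, compl_compl, add_comm]

theorem sum_choose_le_compDegree_Hfam (hG : j < #G) :
    ∑ i ∈ range (j + 1), (#G).choose i ≤ compDegree (Hfam n j) G := by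
  rw [← card_powerset_filter_card_lt]
  refine (card_le_card fun B hB => ?_).trans (Nat.le_add_left _ _)
  simp only [mem_filter, mem_powerset] at hB
  refine mem_filter.2 ⟨mem_Hfam.2 (by omega), hB.1.ssubset_of_ne ?_⟩
  rintro rfl
  omega

theorem sum_choose_le_compDegree_Hfam_of_le {M : ℕ} (hjM : j < M) (hM : M ≤ #G ∨ M ≤ n - #G) :
    ∑ i ∈ range (j + 1), M.choose i ≤ compDegree (Hfam n j) G := by
  wlog hG : M ≤ #G generalizing G
  · have hGc : M ≤ #Gᶜ := by
      rw [card_compl, Fintype.card_fin]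
      omega
    rw [← compDegree_Hfam_compl]
    exact this (.inl hGc) hGc
  calc ∑ i ∈ range (j + 1), M.choose i ≤ ∑ i ∈ range (j + 1), (#G).choose i := by gcongr
    _ ≤ compDegree (Hfam n j) G := sum_choose_le_compDegree_Hfam (hjM.trans_le hG)

/-- `layerDegree n k` is the number of members of `ℋ_{k-1}` comparable to a fixed set of size `k`
or `n - k`. For a set of size `n - k` these are its subsets of size less than `k` and its proper
supersets. -/
def layerDegree (n k : ℕ) : ℕ := ∑ i ∈ range k, (n - k).choose i + (2 ^ k - 1)

theorem compDegree_Hfam_of_card_add_eq {k : ℕ} (hk : 0 < k) (hkn : 2 * k ≤ n)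
    (hG : #G + k = n) : compDegree (Hfam n (k - 1)) G = layerDegree n k := by
  have hsup : {B ∈ Hfam n (k - 1) | G ⊂ B} = Ioc G univ := by
    ext B
    simp only [mem_filter, mem_Hfam, mem_Ioc, subset_univ, and_true,
      and_iff_right_iff_imp]
    intro hGB
    have := card_lt_card hGB
    omega
  have hsub : {B ∈ Hfam n (k - 1) | B ⊂ G} = {B ∈ G.powerset | #B < k} := by
    ext B
    simp only [mem_filter, mem_Hfam, mem_powerset]
    refine ⟨fun ⟨_, hBG⟩ => ⟨hBG.subset, ?_⟩,
      fun ⟨hBG, hB⟩ => ⟨by omega, hBG.ssubset_of_ne ?_⟩⟩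
    · have := card_lt_card hBG
      omega
    · rintro rfl
      omega
  rw [compDegree, hsup, hsub, card_Ioc_finset (subset_univ G), card_powerset_filter_card_lt,
    card_fin, layerDegree, show n - #G = k by omega, show n - k = #G by omega, add_comm]

theorem compDegree_Hfam_of_card_eq {k : ℕ} (hk : 0 < k) (hkn : 2 * k ≤ n)
    (hG : #G = k ∨ #G = n - k) : compDegree (Hfam n (k - 1)) G = layerDegree n k := by
  rcases hG with hG | hG
  · rw [← compDegree_Hfam_compl]
    exact compDegree_Hfam_of_card_add_eq hk hkn (by rw [card_compl, Fintype.card_fin]; omega)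
  · exact compDegree_Hfam_of_card_add_eq hk hkn (by omega)

end OuterLayers

section MiddleLayers

variable {n k t : ℕ}

theorem seven_mul_two_pow_le_eight_mul_sum_choose (hkn : 2 * k < n) (hk : n + 4 + t ≤ 3 * k)
    (hsq : 8 * (n - k + 2) ≤ t ^ 2) {N r : ℕ} (hN : N ≠ 0) (hNk : N ≤ n - k + 2)
    (hr : k ≤ r + 1) : 7 * 2 ^ N ≤ 8 * ∑ i ∈ range r, N.choose i := by
  have hchebyshev : 8 * 2 ^ N ≤ 8 * ∑ i ∈ range r, N.choose i + 2 ^ N :=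
    mul_two_pow_le_mul_sum_choose_add hN (by omega) ((Nat.mul_le_mul_left 8 hNk).trans hsq)
  omega

theorem two_mul_two_pow_add_two_pow_le (hkn : 2 * k < n) :
    2 * (2 ^ (n - k) + 2 ^ k) ≤ 3 * 2 ^ (n - k) := by
  have : 2 ^ (k + 1) ≤ 2 ^ (n - k) := Nat.pow_le_pow_right two_pos (by omega)
  rw [pow_succ] at this
  omega

theorem two_mul_le_compDegree_of_mem_Hfam (hkn : 2 * k < n) (hk : n + 4 + t ≤ 3 * k)
    (hsq : 8 * (n - k + 2) ≤ t ^ 2) {G : Finset (Fin n)}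
    (hG : G ∈ Hfam n (k - 2)) :
    2 * (2 ^ (n - k) + 2 ^ k) ≤ compDegree (Hfam n (k - 2)) G := by
  rw [mem_Hfam] at hG
  have htail := seven_mul_two_pow_le_eight_mul_sum_choose hkn hk hsq (N := n - k + 2)
    (r := k - 2 + 1) (by omega) le_rfl (by omega)
  have hdeg := sum_choose_le_compDegree_Hfam_of_le (j := k - 2) (M := n - k + 2) (G := G)
    (by omega) (by omega)
  have hpow := two_mul_two_pow_add_two_pow_le hkn
  rw [pow_add] at htail
  omega

theorem le_compDegree_of_mem_Hfam (hkn : 2 * k < n) (hk : n + 4 + t ≤ 3 * k)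
    (hsq : 8 * (n - k + 2) ≤ t ^ 2) {G : Finset (Fin n)}
    (hG : G ∈ Hfam n (k - 1)) :
    2 ^ (n - k) + 2 ^ k ≤ compDegree (Hfam n (k - 2)) G := by
  rw [mem_Hfam] at hG
  have htail := seven_mul_two_pow_le_eight_mul_sum_choose hkn hk hsq (N := n - k + 1)
    (r := k - 2 + 1) (by omega) (by omega) (by omega)
  have hdeg := sum_choose_le_compDegree_Hfam_of_le (j := k - 2) (M := n - k + 1) (G := G)
    (by omega) (by omega)
  have hpow := two_mul_two_pow_add_two_pow_le hkn
  rw [pow_add] at htail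
  omega

theorem two_pow_add_two_pow_le_layerDegree (hkn : 2 * k + 2 ≤ n) (hk : n + 4 + t ≤ 3 * k)
    (hsq : 8 * (n - k + 2) ≤ t ^ 2) :
    2 ^ (n - (k + 1)) + 2 ^ (k + 1) ≤ layerDegree n k := by
  have htail := seven_mul_two_pow_le_eight_mul_sum_choose (by omega) hk hsq (N := n - k)
    (r := k) (by omega) (by omega) (by omega)
  have hhalf : 2 ^ (n - k) = 2 * 2 ^ (n - (k + 1)) := by
    rw [← pow_succ']
    congr 1
    omega
  have hquarter : 2 ^ (k + 2) ≤ 2 ^ (n - k) := Nat.pow_le_pow_right two_pos (by omega)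
  have hpow_large : 2 ^ 3 ≤ 2 ^ (n - k) := Nat.pow_le_pow_right two_pos (by omega)
  rw [pow_add] at hquarter
  rw [layerDegree, pow_succ 2 k]
  omega

theorem exists_compCount_le_of_card_eq (hkn : 2 * k < n) (hk : n + 4 + t ≤ 3 * k)
    (hsq : 8 * (n - k + 2) ≤ t ^ 2) {m : ℕ} {𝒢 : Finset (Finset (Fin n))}
    (h𝒢 : #𝒢 = Mnum n (k - 1) + m) :
    ∃ a b, a + b ≤ m ∧
      compCount 𝒢 ≤ compCount (Hfam n (k - 1)) + m * layerDegree n k + a * b := by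
  have hmiddle {G : Finset (Fin n)} (hG : G ∉ Hfam n (k - 1)) : k ≤ #G ∧ #G + k ≤ n := by
    rw [mem_Hfam] at hG
    omega
  obtain ⟨𝒬, rfl, hdisj, h𝒢𝒬⟩ := exists_disjoint_compCount_le_union (Hfam_mono (by omega))
    (fun G hG => two_mul_le_compDegree_of_mem_Hfam hkn hk hsq hG)
    (fun G hG => le_compDegree_of_mem_Hfam hkn hk hsq hG)
    (fun G hG => compDegree_le_of_card (hmiddle hG).1 (hmiddle hG).2) h𝒢
  obtain ⟨a, b, hab, h𝒬⟩ := compCount_union_le_of_two_layers (x := k) (y := n - k)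
    (D := layerDegree n k) (by omega) hdisj
    (fun G _ hG => (compDegree_Hfam_of_card_eq (by omega) hkn.le hG).le) fun G hGQ hG => by
      have := hmiddle (disjoint_right.1 hdisj hGQ)
      exact (compDegree_le_of_card (a := k + 1) (by omega) (by omega)).trans
        (two_pow_add_two_pow_le_layerDegree (by omega) hk hsq)
  exact ⟨a, b, hab, h𝒢𝒬.trans h𝒬⟩

variable {𝒜 ℬ : Finset (Finset (Fin n))}

theorem disjoint_Hfam_union (hk : 0 < k) (hkn : 2 * k ≤ n) (h𝒜 : ∀ A ∈ 𝒜, #A = k)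
    (hℬ : ∀ B ∈ ℬ, #B = n - k) : Disjoint (Hfam n (k - 1)) (𝒜 ∪ ℬ) := by
  refine disjoint_right.2 fun G hG => ?_
  rw [mem_Hfam]
  rcases mem_union.1 hG with hG | hG
  · have := h𝒜 G hG
    omega
  · have := hℬ G hG
    omega

theorem card_union_of_layers (hkn : 2 * k < n) (h𝒜 : ∀ A ∈ 𝒜, #A = k)
    (hℬ : ∀ B ∈ ℬ, #B = n - k) : #(𝒜 ∪ ℬ) = #𝒜 + #ℬ :=
  card_union_of_disjoint <| disjoint_left.2 fun G hGA hGB => by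
    have := h𝒜 G hGA
    have := hℬ G hGB
    omega

theorem card_Hfam_union_union (hk : 0 < k) (hkn : 2 * k < n) (h𝒜 : ∀ A ∈ 𝒜, #A = k)
    (hℬ : ∀ B ∈ ℬ, #B = n - k) :
    #(Hfam n (k - 1) ∪ 𝒜 ∪ ℬ) = Mnum n (k - 1) + (#𝒜 + #ℬ) := by
  rw [union_assoc, card_union_of_disjoint (disjoint_Hfam_union hk hkn.le h𝒜 hℬ),
    card_union_of_layers hkn h𝒜 hℬ, Mnum]

theorem le_compCount_Hfam_union_union (hk : 0 < k) (hkn : 2 * k < n) (h𝒜 : ∀ A ∈ 𝒜, #A = k)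
    (hℬ : ∀ B ∈ ℬ, #B = n - k) (h𝒜ℬ : ∀ A ∈ 𝒜, ∀ B ∈ ℬ, A ⊆ B) :
    compCount (Hfam n (k - 1)) + (#𝒜 + #ℬ) * layerDegree n k + #𝒜 * #ℬ ≤
      compCount (Hfam n (k - 1) ∪ 𝒜 ∪ ℬ) := by
  have hdisj := disjoint_Hfam_union hk hkn.le h𝒜 hℬ
  have hdeg : ∀ G ∈ 𝒜 ∪ ℬ, compDegree (Hfam n (k - 1)) G = layerDegree n k := fun G hG =>
    compDegree_Hfam_of_card_eq hk hkn.le ((mem_union.1 hG).imp (h𝒜 G) (hℬ G))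
  have hssubset : ∀ A ∈ 𝒜, ∀ B ∈ ℬ, A ⊂ B := fun A hA B hB =>
    (h𝒜ℬ A hA B hB).ssubset_of_ne fun hAB => by
      have hAk := h𝒜 A hA
      rw [hAB, hℬ B hB] at hAk
      omega
  rw [union_assoc, compCount_union hdisj, sum_const_nat hdeg,
    card_union_of_layers hkn h𝒜 hℬ]
  exact Nat.add_le_add_left (card_mul_card_le_compCount_union hssubset) _

theorem nat_bounds_of_div_three_add_sqrt_le (hk1 : (n : ℝ) / 3 + √n ≤ k)
    (hk2 : (k : ℝ) < (n : ℝ) / 2) :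
    2 * k < n ∧ ∃ t, n + 4 + t ≤ 3 * k ∧ 8 * (n - k + 2) ≤ t ^ 2 := by
  have hsq : √(n : ℝ) ^ 2 = n := Real.sq_sqrt n.cast_nonneg
  have hsix : 6 < √(n : ℝ) := by
    by_contra! hle
    nlinarith [Real.sqrt_nonneg (n : ℝ)]
  have hkn : 2 * k < n := by
    exact_mod_cast (by linarith : (2 * k : ℝ) < n)
  have hk : n + 4 ≤ 3 * k := by
    exact_mod_cast (by linarith : (n + 4 : ℝ) ≤ 3 * k)
  refine ⟨hkn, 3 * k - n - 4, by omega, ?_⟩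
  rw [← Nat.cast_le (α := ℝ)]
  push_cast [Nat.cast_sub (show k ≤ n by omega), Nat.cast_sub (show 4 ≤ 3 * k - n by omega),
    Nat.cast_sub (show n ≤ 3 * k by omega)]
  calc 8 * ((n : ℝ) - k + 2) ≤ 8 * (2 / 3 * √n ^ 2 - √n + 2) := by linarith
    _ ≤ (3 * √n - 4) ^ 2 := by nlinarith
    _ ≤ (3 * k - n - 4) ^ 2 := by gcongr <;> linarith

theorem stmt15_general (hk1 : (n : ℝ) / 3 + √n ≤ k) (hk2 : (k : ℝ) < (n : ℝ) / 2)
    (h𝒜 : ∀ A ∈ 𝒜, #A = k) (hℬ : ∀ B ∈ ℬ, #B = n - k) (h𝒜ℬ : ∀ A ∈ 𝒜, ∀ B ∈ ℬ, A ⊆ B)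
    (hcard𝒜 : #𝒜 ≤ #ℬ + 1) (hcardℬ : #ℬ ≤ #𝒜 + 1) :
    maxComp n (Mnum n (k - 1) + (#𝒜 + #ℬ)) = compCount (Hfam n (k - 1) ∪ 𝒜 ∪ ℬ) := by
  obtain ⟨hkn, t, hk, hsq⟩ := nat_bounds_of_div_three_add_sqrt_le hk1 hk2
  rw [← card_Hfam_union_union (by omega) hkn h𝒜 hℬ]
  refine maxComp_eq_compCount fun 𝒢 h𝒢 => ?_
  rw [card_Hfam_union_union (by omega) hkn h𝒜 hℬ] at h𝒢
  obtain ⟨a, b, hab, hle⟩ := exists_compCount_le_of_card_eq hkn hk hsq h𝒢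
  calc compCount 𝒢
      ≤ compCount (Hfam n (k - 1)) + (#𝒜 + #ℬ) * layerDegree n k + a * b := hle
    _ ≤ compCount (Hfam n (k - 1)) + (#𝒜 + #ℬ) * layerDegree n k + #𝒜 * #ℬ :=
        Nat.add_le_add_left (mul_le_mul_of_add_le_of_balanced hab hcard𝒜 hcardℬ) _
    _ ≤ compCount (Hfam n (k - 1) ∪ 𝒜 ∪ ℬ) :=
        le_compCount_Hfam_union_union (by omega) hkn h𝒜 hℬ h𝒜ℬ

end MiddleLayers

theorem stmt15 (n : ℕ) (hn : Even n) (k : ℕ)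
    (hk1 : (n : ℝ) / 3 + Real.sqrt (2 * n * Real.log 2) ≤ k)
    (hk2 : (k : ℝ) < (n : ℝ) / 2)
    (m' : ℕ) (hm' : m' ≤ 2 * (n / 2).choose k)
    (X : Finset (Fin n)) (hX : X.card = n / 2)
    (𝒜 ℬ : Finset (Finset (Fin n)))
    (h𝒜card : 𝒜.card = m' / 2) (h𝒜 : ∀ A ∈ 𝒜, A ⊆ X ∧ A.card = k)
    (hℬcard : ℬ.card = (m' + 1) / 2) (hℬ : ∀ B ∈ ℬ, X ⊆ B ∧ B.card = n - k) :
    maxComp n (Mnum n (k - 1) + m') = compCount (Hfam n (k - 1) ∪ 𝒜 ∪ ℬ) := by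
  have hsqrt : √(n : ℝ) ≤ √(2 * n * Real.log 2) :=
    Real.sqrt_le_sqrt (by nlinarith [Real.log_two_gt_d9, n.cast_nonneg (α := ℝ)])
  obtain rfl : m' = #𝒜 + #ℬ := by omega
  exact stmt15_general (by linarith) hk2 (fun A hA => (h𝒜 A hA).2) (fun B hB => (hℬ B hB).2)
    (fun A hA B hB => (h𝒜 A hA).1.trans (hℬ B hB).1) (by omega) (by omega)
end
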